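/- arXiv:1803.10001 — 7 statements merged into one kernel-verified Lean document; each statement's English description precedes it below -/
import Mathlib

section
/- For every real λ > 0, every complex α with Re α > 0, and every real T, the Fourier transform of the Gamma function along a vertical line satisfies the exact identity ∫_{-∞}^{∞} Γ(iλz + α) e^{-iTz} dz = (2π/λ) exp(−e^{T/λ} + Tα/λ). -/
open MeasureTheory in
lemma Gamma_norm_le_aux (s : ℂ) (hs : 0 < s.re) :
    ‖Complex.Gamma s‖ ≤ Real.Gamma s.re := by
  rw [Complex.Gamma_eq_integral hs, Real.Gamma_eq_integral hs, Complex.GammaIntegral]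
  refine (norm_integral_le_integral_norm _).trans (le_of_eq ?_)
  refine setIntegral_congr_fun measurableSet_Ioi fun x hx => ?_
  have hx' : (0 : ℝ) < x := hx
  simp only [norm_mul, Complex.norm_real, Real.norm_eq_abs, Real.abs_exp]
  rw [Complex.norm_cpow_eq_rpow_re_of_pos hx']
  simp

lemma Gamma_bound_aux (σ : ℝ) (hσ : 0 < σ) (t : ℝ) :
    ‖Complex.Gamma (σ + t * Complex.I)‖ ≤ Real.Gamma (σ + 2) / min σ 1 * (1 + t ^ 2)⁻¹ := by
  set s : ℂ := σ + t * Complex.I with hs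
  have hre : s.re = σ := by simp [hs]
  have him : s.im = t := by simp [hs]
  have h0 : s ≠ 0 := fun h => by rw [h] at hre; simp at hre; linarith
  have h1 : s + 1 ≠ 0 := fun h => by
    have := congrArg Complex.re h
    simp [hre] at this; linarith
  have e : Complex.Gamma (s + 2) = (s + 1) * (s * Complex.Gamma s) := by
    rw [← Complex.Gamma_add_one s h0, ← Complex.Gamma_add_one (s + 1) h1]
    congr 1; ring
  have hb : ‖Complex.Gamma (s + 2)‖ ≤ Real.Gamma (σ + 2) := by
    have := Gamma_norm_le_aux (s + 2) (by simp [hre]; linarith)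
    simpa [hre] using this
  rw [e, norm_mul, norm_mul] at hb
  set m := min σ 1 with hm
  have hm0 : 0 < m := lt_min hσ one_pos
  have hmσ : m ≤ σ := min_le_left _ _
  have hm1 : m ≤ 1 := min_le_right _ _
  set r := √(1 + t ^ 2) with hr
  have hr2 : r ^ 2 = 1 + t ^ 2 := Real.sq_sqrt (by positivity)
  have hr0 : 0 < r := Real.sqrt_pos.2 (by positivity)
  have a1 : m * r ≤ ‖s‖ := by
    refine le_of_sq_le_sq ?_ (norm_nonneg _)
    rw [Complex.sq_norm, Complex.normSq_apply, hre, him, mul_pow, hr2]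
    have : m ^ 2 ≤ σ ^ 2 := by gcongr
    have : m ^ 2 ≤ 1 := by nlinarith
    nlinarith [sq_nonneg t]
  have a2 : r ≤ ‖s + 1‖ := by
    refine le_of_sq_le_sq ?_ (norm_nonneg _)
    rw [Complex.sq_norm, Complex.normSq_apply, hr2]
    simp [hre, him]
    nlinarith
  have a3 : r * (m * r * ‖Complex.Gamma s‖) ≤ Real.Gamma (σ + 2) := by
    refine le_trans ?_ hb
    gcongr
  rw [← div_eq_mul_inv, div_div, le_div_iff₀ (by positivity), ← hr2]
  linarith

open MeasureTheory in
lemma Gamma_vertical_aux (σ : ℝ) (hσ : 0 < σ) :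
    Integrable (fun t : ℝ => Complex.Gamma (σ + t * Complex.I)) := by
  refine Integrable.mono' (integrable_inv_one_add_sq.const_mul (Real.Gamma (σ + 2) / min σ 1))
    (Continuous.aestronglyMeasurable ?_) (Filter.Eventually.of_forall (Gamma_bound_aux σ hσ))
  rw [continuous_iff_continuousAt]
  intro t
  have : ContinuousAt Complex.Gamma (σ + t * Complex.I) := by
    refine (Complex.differentiableAt_Gamma _ fun n h => ?_).continuousAt
    have := congrArg Complex.re h
    simp at this
    have : (0 : ℝ) ≤ n := n.cast_nonneg
    linarith
  exact ContinuousAt.comp (f := fun t : ℝ => (σ + t * Complex.I : ℂ)) this (by fun_prop)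

open MeasureTheory in
lemma Gamma_inv_aux (σ : ℝ) (hσ : 0 < σ) (x : ℝ) (hx : 0 < x) :
    ∫ y : ℝ, (x : ℂ) ^ (-(σ + y * Complex.I) : ℂ) * Complex.Gamma (σ + y * Complex.I)
      = 2 * Real.pi * (Real.exp (-x) : ℝ) := by
  have key : ∀ y : ℝ, mellin (fun x : ℝ => ((Real.exp (-x) : ℝ) : ℂ)) (σ + y * Complex.I)
      = Complex.Gamma (σ + y * Complex.I) := fun y => by
    rw [← Complex.GammaIntegral_eq_mellin, Complex.Gamma_eq_integral (by simpa using hσ)]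
  have h := mellinInv_mellin_eq σ (fun x : ℝ => ((Real.exp (-x) : ℝ) : ℂ)) hx
    (by
      have := Complex.GammaIntegral_convergent (s := σ) (by simpa using hσ)
      refine this.congr_fun (fun x _ => ?_) measurableSet_Ioi
      simp [mul_comm])
    (by
      unfold Complex.VerticalIntegrable
      simp_rw [key]
      exact Gamma_vertical_aux σ hσ)
    (by fun_prop)
  simp only [mellinInv, key, smul_eq_mul] at h
  rw [← h]
  have : (Real.pi : ℂ) ≠ 0 := by simp [Real.pi_ne_zero]
  simp only [Complex.real_smul]
  generalize (∫ y : ℝ, (x : ℂ) ^ (-(σ + y * Complex.I) : ℂ) *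
    Complex.Gamma (σ + y * Complex.I)) = J
  push_cast
  field_simp

/-- **Fourier transform of a single Gamma function.**
For every real `λ > 0`, every complex `α` with `Re α > 0`, and every real `T`,
`∫_{-∞}^{∞} Γ(iλz + α) e^{-iTz} dz = (2π/λ) exp(−e^{T/λ} + Tα/λ)`. -/
theorem fourier_transform_Gamma (lam : ℝ) (hlam : 0 < lam) (α : ℂ) (hα : 0 < α.re) (T : ℝ) :
    (∫ z : ℝ, Complex.Gamma (Complex.I * lam * z + α) * Complex.exp (-(Complex.I * T * z))) =
      ((2 * Real.pi / lam : ℝ) : ℂ) *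
        Complex.exp (-((Real.exp (T / lam) : ℝ) : ℂ) + (T : ℂ) * α / (lam : ℂ)) := by
  have hl : (lam : ℂ) ≠ 0 := by exact_mod_cast hlam.ne'
  have h := Gamma_inv_aux α.re hα (Real.exp (T / lam)) (Real.exp_pos _)
  set F : ℝ → ℂ := fun y => ((Real.exp (T / lam) : ℝ) : ℂ) ^ (-(α.re + y * Complex.I) : ℂ) *
    Complex.Gamma (α.re + y * Complex.I) with hF
  have e : ∀ z : ℝ, Complex.Gamma (Complex.I * lam * z + α) * Complex.exp (-(Complex.I * T * z))
      = Complex.exp ((T : ℂ) * α / lam) * F (lam * z + α.im) := fun z => by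
    have e1 : ((α.re : ℂ) + ((lam * z + α.im : ℝ) : ℂ) * Complex.I) = Complex.I * lam * z + α := by
      conv_rhs => rw [← Complex.re_add_im α]
      push_cast; ring
    simp only [hF]
    rw [e1, Complex.cpow_def_of_ne_zero (by exact_mod_cast (Real.exp_pos _).ne'),
      ← Complex.ofReal_log (Real.exp_pos _).le, Real.log_exp, ← mul_assoc, ← Complex.exp_add,
      mul_comm]
    congr 2
    push_cast
    field_simp
    ring
  simp_rw [e]
  rw [MeasureTheory.integral_const_mul,
    MeasureTheory.Measure.integral_comp_mul_left (fun y => F (y + α.im)) lam,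
    MeasureTheory.integral_add_right_eq_self F, h, Complex.exp_add, abs_of_pos (by positivity),
    Complex.real_smul]
  push_cast
  field_simp
end

section
/- Let k ≥ 1, let λ_1,…,λ_k > 0 be reals and α_1,…,α_k ∈ ℂ with Re α_j > 0 for all j. Set Λ = ∑_{j=1}^k λ_j, A = ∑_{j=1}^k α_j and C_k = (2π)^{(k+1)/2} Λ^{−1/2} ∏_{j=1}^k λ_j^{−1/2 + α_j + λ_j((k−1)/2 − A)/Λ}. Then as T → +∞, ∫_{-∞}^{∞} (∏_{j=1}^k Γ(α_j + iλ_j z)) e^{-iTz} dz = C_k · exp(−Λ e^{T/Λ} ∏_{j=1}^k λ_j^{−λ_j/Λ} + T(A − (k−1)/2)/Λ) · (1 + O(e^{−T/Λ})); i.e. the ratio of the left side to C_k exp(−Λ e^{T/Λ} ∏ λ_j^{−λ_j/Λ} + T(A − (k−1)/2)/Λ) equals 1 + O(e^{−T/Λ}) as T → ∞. -/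
open Filter Finset

section FGP
open MeasureTheory Complex
open scoped FourierTransform

/-- One-dimensional Fourier inversion with the `e^{iyu}` normalisation. -/
lemma fgp_inversion (f h : ℝ → ℂ) (hf : Continuous f) (hfi : Integrable f)
    (hh : ∀ y : ℝ, h y = ∫ u : ℝ, f u * cexp (I * y * u)) (hhi : Integrable h)
    (l : ℝ) (hl : 0 < l) (S : ℝ) :
    ∫ z : ℝ, h (l * z) * cexp (-(I * S * z)) = ((2 * Real.pi / l : ℝ) : ℂ) * f (S / l) := by
  have hpi : (2 * Real.pi) ≠ 0 := by positivity
  have e1 : ∀ v : ℝ, 𝓕⁻ f v = h ((2 * Real.pi) * v) := by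
    intro v
    rw [Real.fourierInv_eq', hh]
    congr 1
    ext u
    simp only [smul_eq_mul]
    rw [mul_comm]
    congr 2
    simp
    ring
  have hint : Integrable (𝓕⁻ f) := by
    have : 𝓕⁻ f = fun v => h ((2 * Real.pi) * v) := funext e1
    rw [this]
    exact hhi.comp_mul_left' hpi
  have hint' : Integrable (𝓕 f) := by
    have : 𝓕 f = fun v => 𝓕⁻ f (-v) := by
      ext v
      rw [Real.fourierInv_eq_fourier_neg, neg_neg]
    rw [this]
    exact hint.comp_neg
  have key : 𝓕 (𝓕⁻ f) (S / l) = f (S / l) := by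
    rw [hf.fourier_fourierInv_eq hfi hint']
  rw [← key, Real.fourier_eq']
  have := Measure.integral_comp_mul_left
    (fun z : ℝ => h (l * z) * cexp (-(I * S * z))) (2 * Real.pi / l)
  rw [abs_of_pos (by positivity)] at this
  have h2 : (fun v : ℝ => cexp (((-2 * Real.pi * inner ℝ v (S / l) : ℝ) : ℂ) * I) • 𝓕⁻ f v)
      = fun x : ℝ => h (l * (2 * Real.pi / l * x)) * cexp (-(I * S * ((2 * Real.pi / l * x : ℝ) : ℂ))) := by
    ext v
    rw [e1, smul_eq_mul, mul_comm]
    congr 2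
    · field_simp
    · simp
      have : (l : ℂ) ≠ 0 := by exact_mod_cast hl.ne'
      field_simp
  rw [h2, this, Complex.real_smul, ← mul_assoc, ← Complex.ofReal_mul]
  rw [mul_inv_cancel₀ (by positivity)]
  simp

/-- The basic integral: convolution formula. -/
lemma fgp_conv (n : ℕ) (lam : Fin (n+1) → ℝ) (hlam : ∀ j, 0 < lam j)
    (f h : Fin (n+1) → ℝ → ℂ) (hf : ∀ j, Continuous (f j)) (hfi : ∀ j, Integrable (f j))
    (hh : ∀ j, ∀ y : ℝ, h j y = ∫ u : ℝ, f j u * cexp (I * y * u)) (hhi : Integrable (h 0))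
    (T : ℝ) :
    ∫ z : ℝ, (∏ j, h j (lam j * z)) * cexp (-(I * T * z)) =
      ((2 * Real.pi / lam 0 : ℝ) : ℂ) * ∫ x : Fin n → ℝ,
        (∏ j, f j.succ (x j)) * f 0 ((T - ∑ j, lam j.succ * x j) / lam 0) := by
  have step : ∀ z : ℝ, (∏ j, h j (lam j * z)) * cexp (-(I * T * z)) =
      ∫ x : Fin n → ℝ, h 0 (lam 0 * z) * (∏ j, f j.succ (x j)) *
        cexp (-(I * (T - ∑ j, lam j.succ * x j : ℝ) * z)) := by
    intro z
    have e : ∀ x : Fin n → ℝ, h 0 (lam 0 * z) * (∏ j, f j.succ (x j)) *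
        cexp (-(I * (T - ∑ j, lam j.succ * x j : ℝ) * z)) =
        (h 0 (lam 0 * z) * cexp (-(I * T * z))) *
        ∏ j, (f j.succ (x j) * cexp (I * (lam j.succ * z : ℝ) * (x j))) := by
      intro x
      rw [prod_mul_distrib, ← Complex.exp_sum]
      have : cexp (-(I * (T - ∑ j, lam j.succ * x j : ℝ) * z)) =
        cexp (-(I * T * z)) * cexp (∑ j, I * (lam j.succ * z : ℝ) * (x j)) := by
        rw [← Complex.exp_add]
        congr 1
        push_cast
        have : ∑ j, I * ((lam j.succ : ℂ) * z) * (x j) = I * z * ∑ j, (lam j.succ : ℂ) * (x j) := by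
          rw [mul_sum]
          exact sum_congr rfl fun j _ => by ring
        rw [this]
        ring
      rw [this]
      ring
    simp_rw [e]
    rw [integral_const_mul, integral_fintype_prod_volume_eq_prod
      (fun (j : Fin n) (u : ℝ) => f j.succ u * cexp (I * (lam j.succ * z : ℝ) * u))]
    rw [Fin.prod_univ_succ]
    simp_rw [← hh]
    ring
  simp_rw [step]
  rw [integral_integral_swap]
  · rw [← integral_const_mul]
    congr 1
    ext x
    have := fgp_inversion (f 0) (h 0) (hf 0) (hfi 0) (hh 0) hhi (lam 0) (hlam 0)
      (T - ∑ j, lam j.succ * x j)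
    calc _ = ∫ z : ℝ, (∏ j, f j.succ (x j)) * (h 0 (lam 0 * z) *
          cexp (-(I * (T - ∑ j, lam j.succ * x j : ℝ) * z))) := by
          congr 1; ext z; ring
      _ = _ := by
        rw [integral_const_mul, this]; ring
  · have h1 : Integrable (fun z : ℝ => h 0 (lam 0 * z)) := hhi.comp_mul_left' (hlam 0).ne'
    have h2 : Integrable (fun x : Fin n → ℝ => ∏ j, f j.succ (x j)) :=
      Integrable.fintype_prod (fun j : Fin n => hfi j.succ)
    have h3 := h1.mul_prod h2
    refine (h3.mul_bdd (c := 1) (g := fun p : ℝ × (Fin n → ℝ) =>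
      cexp (-(I * (T - ∑ j, lam j.succ * p.2 j : ℝ) * p.1))) ?_ ?_)
    · apply Continuous.aestronglyMeasurable
      fun_prop
    · filter_upwards with p
      rw [Complex.norm_exp]
      simp

/-- The logarithmic Gamma density. -/
noncomputable def fgpF (α : ℂ) (u : ℝ) : ℂ := cexp (-(Real.exp u : ℂ) + α * u)

lemma fgpF_continuous (α : ℂ) : Continuous (fgpF α) := by
  unfold fgpF; fun_prop

lemma fgp_gamma_aux (s : ℂ) (u : ℝ) :
    |Real.exp u| • ((Real.exp (-(Real.exp u)) : ℂ) * ((Real.exp u : ℝ) : ℂ) ^ (s - 1)) =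
      fgpF s u := by
  have h0 : ((Real.exp u : ℝ) : ℂ) ≠ 0 := by exact_mod_cast (Real.exp_pos u).ne'
  rw [abs_of_pos (Real.exp_pos u), Complex.real_smul, fgpF, cpow_def_of_ne_zero h0,
    ← Complex.ofReal_log (Real.exp_pos u).le, Real.log_exp]
  push_cast
  rw [← Complex.exp_add, ← Complex.exp_add]
  congr 1
  ring

lemma fgp_image : Real.exp '' Set.univ = Set.Ioi 0 := by
  rw [Set.image_univ, Real.range_exp]

lemma fgpF_integrable (α : ℂ) (h : 0 < α.re) : Integrable (fgpF α) := by
  have := Complex.GammaIntegral_convergent h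
  rw [← fgp_image, integrableOn_image_iff_integrableOn_abs_deriv_smul MeasurableSet.univ
    (fun x _ => (Real.hasDerivAt_exp x).hasDerivWithinAt) Real.exp_injective.injOn,
    integrableOn_univ] at this
  exact this.congr (Eventually.of_forall fun u => fgp_gamma_aux α u)

lemma fgp_Gamma (s : ℂ) (h : 0 < s.re) : Complex.Gamma s = ∫ u : ℝ, fgpF s u := by
  rw [Complex.Gamma_eq_integral h, Complex.GammaIntegral, ← fgp_image,
    integral_image_eq_integral_abs_deriv_smul MeasurableSet.univ
    (fun x _ => (Real.hasDerivAt_exp x).hasDerivWithinAt) Real.exp_injective.injOn]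
  rw [Measure.restrict_univ]
  congr 1
  ext u
  exact fgp_gamma_aux s u

lemma fgp_Gamma_fourier (α : ℂ) (h : 0 < α.re) (y : ℝ) :
    Complex.Gamma (α + I * y) = ∫ u : ℝ, fgpF α u * cexp (I * y * u) := by
  rw [fgp_Gamma _ (by simpa using h)]
  congr 1
  ext u
  rw [fgpF, fgpF, ← Complex.exp_add]
  congr 1
  ring

lemma fgp_Gamma_bound (s : ℂ) (h : 0 < s.re) : ‖Complex.Gamma s‖ ≤ ∫ u : ℝ, ‖fgpF (s.re : ℂ) u‖ := by
  rw [fgp_Gamma s h]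
  refine (norm_integral_le_integral_norm _).trans (le_of_eq ?_)
  congr 1
  ext u
  simp [fgpF, Complex.norm_exp]

lemma fgp_Gamma_integrable (α : ℂ) (h : 0 < α.re) :
    Integrable (fun y : ℝ => Complex.Gamma (α + I * y)) := by
  set C := ∫ u : ℝ, ‖fgpF ((α.re + 2 : ℝ) : ℂ) u‖ with hC
  have hC0 : 0 ≤ C := integral_nonneg fun _ => norm_nonneg _
  have hcont : Continuous (fun y : ℝ => Complex.Gamma (α + I * y)) := by
    rw [continuous_iff_continuousAt]
    intro y
    have : ContinuousAt Complex.Gamma (α + I * y) := by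
      apply (Complex.differentiableAt_Gamma _ _).continuousAt
      intro m hm
      have := congrArg Complex.re hm
      simp at this
      have : (0 : ℝ) ≤ m := Nat.cast_nonneg m
      linarith
    exact ContinuousAt.comp (f := fun y : ℝ => α + I * y) this (by fun_prop)
  -- bound by translate of `1/(1+y^2)`
  obtain ⟨m, hm0, hm⟩ : ∃ m : ℝ, 0 < m ∧ m ≤ 1 ∧ m ≤ α.re ^ 2 :=
    ⟨min 1 (α.re ^ 2), by positivity, min_le_left _ _, min_le_right _ _⟩
  have hb : Integrable (fun y : ℝ => (C / m) * (1 + (y + α.im) ^ 2)⁻¹) :=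
    (integrable_inv_one_add_sq.comp_add_right α.im).const_mul _
  refine hb.mono' hcont.aestronglyMeasurable (Eventually.of_forall fun y => ?_)
  set s := α + I * y with hs
  have hre : s.re = α.re := by simp [hs]
  have him : s.im = y + α.im := by simp [hs]; ring
  have hs0 : s ≠ 0 := by intro h0; rw [h0] at hre; simp at hre; linarith
  have hs1 : s + 1 ≠ 0 := by
    intro h0
    have := congrArg Complex.re h0
    simp [hre] at this; linarith
  have e : Complex.Gamma (s + 2) = (s + 1) * (s * Complex.Gamma s) := by
    rw [← Complex.Gamma_add_one s hs0, ← Complex.Gamma_add_one _ hs1]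
    congr 1; ring
  have hG : ‖Complex.Gamma (s + 2)‖ ≤ C := by
    have := fgp_Gamma_bound (s + 2) (by simp [hre]; linarith)
    simpa [hre, hC] using this
  rw [e, norm_mul, norm_mul, ← mul_assoc] at hG
  have n1 : m * (1 + (y + α.im) ^ 2) ≤ ‖s + 1‖ * ‖s‖ := by
    have a1 : ‖s‖ ^ 2 = α.re ^ 2 + (y + α.im) ^ 2 := by
      rw [← Complex.normSq_eq_norm_sq, Complex.normSq_apply, hre, him]; ring
    have a2 : ‖s‖ ≤ ‖s + 1‖ := by
      rw [← sq_le_sq₀ (norm_nonneg _) (norm_nonneg _), ← Complex.normSq_eq_norm_sq,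
        ← Complex.normSq_eq_norm_sq, Complex.normSq_apply, Complex.normSq_apply]
      simp [hre]
      nlinarith
    have := mul_le_mul_of_nonneg_right a2 (norm_nonneg s)
    nlinarith [sq_nonneg (y + α.im)]
  have : m * (1 + (y + α.im) ^ 2) * ‖Complex.Gamma s‖ ≤ C :=
    (mul_le_mul_of_nonneg_right n1 (norm_nonneg _)).trans hG
  rw [div_mul_eq_mul_div, le_div_iff₀ hm0, ← div_eq_mul_inv, le_div_iff₀ (by positivity)]
  linarith

end FGP
section FGP2
open MeasureTheory Complex
open scoped Topology

/-- Rescaled factor near the saddle point. -/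
noncomputable def fgpG (l : ℝ) (α : ℂ) (ε : ℝ) (w : ℝ) : ℂ :=
  cexp (-((l * (Real.exp (ε * w) - 1 - ε * w) / ε ^ 2 : ℝ) : ℂ) + ε * α * w)

/-- Gaussian limit factor. -/
noncomputable def fgpA (l : ℝ) (w : ℝ) : ℂ := cexp (-((l / 2 : ℝ) : ℂ) * (w : ℂ) ^ 2)

lemma fgpA_norm (l w : ℝ) : ‖fgpA l w‖ = Real.exp (-(l / 2 * |w| ^ 2)) := by
  rw [fgpA, Complex.norm_exp]
  congr 1
  rw [sq_abs]
  norm_cast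
  simp

lemma fgp_poly_gauss (m : ℕ) (a t : ℝ) (ha : 0 < a) (ht : 0 ≤ t) :
    (1 + t) ^ m * Real.exp (-(a * t ^ 2)) ≤ Real.exp ((m + 1) ^ 2 / (4 * a)) * Real.exp (-t) := by
  have h1 : (1 + t) ^ m ≤ Real.exp (m * t) := by
    rw [Real.exp_nat_mul]
    exact pow_le_pow_left₀ (by positivity) (by linarith [Real.add_one_le_exp t]) m
  refine (mul_le_mul_of_nonneg_right h1 (Real.exp_pos _).le).trans ?_
  rw [← Real.exp_add, ← Real.exp_add, Real.exp_le_exp]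
  have : (m + 1) ^ 2 / (4 * a) - (m + 1) * t + a * t ^ 2 = (a * t - (m + 1) / 2) ^ 2 / a := by
    field_simp; ring
  have h2 : 0 ≤ (a * t - ((m : ℝ) + 1) / 2) ^ 2 / a := by positivity
  linarith

lemma fgp_exp_lower (x : ℝ) (hx : 1 ≤ |x|) : |x| / 4 ≤ Real.exp x - 1 - x := by
  have h1 := Real.add_one_le_exp (x / 2)
  have h2 : Real.exp x = Real.exp (x / 2) ^ 2 := by
    rw [← Real.exp_nat_mul]; congr 1; push_cast; ring
  by_cases h : 0 ≤ x / 2 + 1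
  · have : (x / 2 + 1) ^ 2 ≤ Real.exp x := by
      rw [h2]; exact pow_le_pow_left₀ h h1 2
    nlinarith [sq_abs x]
  · rw [abs_of_neg (by linarith)]
    linarith [Real.exp_pos x]

lemma fgp_exp_cubic (x : ℝ) (hx : |x| ≤ 1) :
    |Real.exp x - 1 - x - x ^ 2 / 2 - x ^ 3 / 6| ≤ 5 / 96 * |x| ^ 4 := by
  have := Real.exp_bound hx (n := 4) (by norm_num)
  simp [Finset.sum_range_succ, Nat.factorial] at this
  norm_num at this
  calc _ = |Real.exp x - (1 + x + x ^ 2 / 2 + x ^ 3 / 6)| := by congr 1; ring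
    _ ≤ _ := by linarith

lemma fgp_single (l : ℝ) (hl : 0 < l) (α : ℂ) :
    ∃ C : ℝ, 0 ≤ C ∧ (∀ w, ‖fgpA l w‖ ≤ C * Real.exp (-|w|)) ∧
      (∀ w : ℝ, ‖fgpA l w * (α * w - l * w ^ 3 / 6)‖ ≤ C * Real.exp (-|w|)) ∧
      ∀ᶠ ε : ℝ in 𝓝[>] 0, ∀ w : ℝ,
        ‖fgpG l α ε w - fgpA l w - ε * (fgpA l w * (α * w - l * w ^ 3 / 6))‖ ≤
          C * ε ^ 2 * Real.exp (-|w|) := by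
  set K := 1 + ‖α‖ + l with hK
  have hK1 : 1 ≤ K := by have := norm_nonneg α; linarith
  set B := Real.exp ((((8 : ℕ) : ℝ) + 1) ^ 2 / (4 * (l / 4))) with hB
  have hBt : ∀ t : ℝ, 0 ≤ t → (1 + t) ^ 8 * Real.exp (-(l / 4 * t ^ 2)) ≤ B * Real.exp (-t) :=
    fun t ht => fgp_poly_gauss 8 (l / 4) t (by positivity) ht
  have hB0 : 0 < B := Real.exp_pos _
  have hgl : ∀ t : ℝ, Real.exp (-(l / 2 * t ^ 2)) ≤ Real.exp (-(l / 4 * t ^ 2)) := fun t => by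
    rw [Real.exp_le_exp]; nlinarith [sq_nonneg t]
  -- bound on p
  have hp : ∀ w : ℝ, ‖α * w - l * w ^ 3 / 6‖ ≤ (K - 1) * (1 + |w|) ^ 3 := by
    intro w
    have h0 := abs_nonneg w
    have : ‖α * w - l * w ^ 3 / 6‖ ≤ ‖α‖ * |w| + l * |w| ^ 3 / 6 := by
      refine (norm_sub_le _ _).trans (le_of_eq ?_)
      simp [abs_of_pos hl]
    have h1 : |w| ≤ (1 + |w|) ^ 3 := by nlinarith [pow_nonneg h0 2, pow_nonneg h0 3]
    have h2 : |w| ^ 3 / 6 ≤ (1 + |w|) ^ 3 := by nlinarith [pow_nonneg h0 2, pow_nonneg h0 3]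
    have := mul_le_mul_of_nonneg_left h1 (norm_nonneg α)
    have := mul_le_mul_of_nonneg_left h2 hl.le
    rw [hK]; linarith
  have hpK : ∀ w : ℝ, ‖α * w - l * w ^ 3 / 6‖ ≤ K * (1 + |w|) ^ 3 := by
    intro w
    have := hp w
    have h0 : 0 ≤ (1 + |w|) ^ 3 := by positivity
    linarith
  have hpow : ∀ t : ℝ, 0 ≤ t → ∀ m ≤ 8, (1 + t) ^ m ≤ (1 + t) ^ 8 := fun t ht m hm =>
    pow_le_pow_right₀ (by linarith) hm
  set C := (K ^ 2 * Real.exp ‖α‖ + K) * B + (1 + K * B) with hC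
  have hCB : K * B ≤ C := by
    have : 0 ≤ K ^ 2 * Real.exp ‖α‖ * B := by positivity
    have : 0 ≤ K * B := by positivity
    rw [hC]; linarith
  have hbb : ∀ w : ℝ, ‖fgpA l w * (α * w - l * w ^ 3 / 6)‖ ≤ C * Real.exp (-|w|) := by
    intro w
    have h0 := abs_nonneg w
    rw [norm_mul, fgpA_norm]
    calc _ ≤ Real.exp (-(l / 4 * |w| ^ 2)) * (K * (1 + |w|) ^ 8) :=
          mul_le_mul (hgl _) ((hpK w).trans (by
            have := hpow _ h0 3 (by norm_num); gcongr)) (norm_nonneg _) (Real.exp_pos _).le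
      _ = K * ((1 + |w|) ^ 8 * Real.exp (-(l / 4 * |w| ^ 2))) := by ring
      _ ≤ K * (B * Real.exp (-|w|)) := by
          have := hBt _ h0; gcongr
      _ = K * B * Real.exp (-|w|) := by ring
      _ ≤ _ := by gcongr
  have haa : ∀ w : ℝ, ‖fgpA l w‖ ≤ C * Real.exp (-|w|) := by
    intro w
    have h0 := abs_nonneg w
    rw [fgpA_norm]
    have h1 : 1 ≤ (1 + |w|) ^ 8 := one_le_pow₀ (by linarith)
    calc _ ≤ 1 * Real.exp (-(l / 4 * |w| ^ 2)) := by rw [one_mul]; exact hgl _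
      _ ≤ (1 + |w|) ^ 8 * Real.exp (-(l / 4 * |w| ^ 2)) := by gcongr
      _ ≤ 1 * B * Real.exp (-|w|) := by rw [one_mul]; exact hBt _ h0
      _ ≤ K * B * Real.exp (-|w|) := by gcongr
      _ ≤ _ := by gcongr
  refine ⟨C, by positivity, haa, hbb, ?_⟩
  have hev : ∀ᶠ ε : ℝ in 𝓝[>] 0, ε < min 1 (l / (4 * (‖α‖ + 3))) := by
    apply mem_nhdsWithin_of_mem_nhds
    exact Iio_mem_nhds (by positivity)
  filter_upwards [hev, self_mem_nhdsWithin] with ε hε hpos w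
  have hpos : 0 < ε := hpos
  have hε1 : ε ≤ 1 := (hε.trans_le (min_le_left _ _)).le
  have hε2 : ε * (4 * (‖α‖ + 3)) ≤ l := by
    have := (hε.trans_le (min_le_right _ _)).le
    rwa [le_div_iff₀ (by positivity)] at this
  have ht := abs_nonneg w
  set t := |w| with htw
  have hxabs : |ε * w| = ε * t := by rw [abs_mul, abs_of_pos hpos]
  by_cases hx : ε * t ≤ 1
  · -- inner region
    set r : ℝ := -(l * (Real.exp (ε * w) - 1 - ε * w - (ε * w) ^ 2 / 2 - (ε * w) ^ 3 / 6) / ε ^ 2)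
      with hr
    have hrb : |r| ≤ 5 / 96 * l * ε ^ 2 * t ^ 4 := by
      have := fgp_exp_cubic (ε * w) (by rw [hxabs]; exact hx)
      rw [hxabs] at this
      rw [hr, abs_neg, abs_div, abs_mul, abs_of_pos hl, abs_of_pos (by positivity : 0 < ε ^ 2),
        div_le_iff₀ (by positivity)]
      calc _ ≤ l * (5 / 96 * (ε * t) ^ 4) := by gcongr
        _ = _ := by ring
    set p : ℂ := α * w - l * w ^ 3 / 6 with hpdef
    set y : ℂ := ε * p + r with hy
    have hG : fgpG l α ε w = fgpA l w * cexp y := by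
      rw [fgpG, fgpA, ← Complex.exp_add]
      congr 1
      rw [hy, hr, hpdef]
      have : (ε : ℂ) ≠ 0 := by exact_mod_cast hpos.ne'
      push_cast
      field_simp
      ring
    have hy1 : ‖y‖ ≤ ‖α‖ + l / 4 * t ^ 2 := by
      have h1 : ‖p‖ ≤ ‖α‖ * t + l * t ^ 3 / 6 := by
        refine (norm_sub_le _ _).trans (le_of_eq ?_)
        simp [abs_of_pos hl, htw]
      have h2 : ‖y‖ ≤ ε * ‖p‖ + |r| := by
        refine (norm_add_le _ _).trans (le_of_eq ?_)
        simp [abs_of_pos hpos]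
      have h3 : ε * ‖p‖ ≤ ‖α‖ * (ε * t) + l * t ^ 2 / 6 * (ε * t) := by
        calc _ ≤ ε * (‖α‖ * t + l * t ^ 3 / 6) := by gcongr
          _ = _ := by ring
      have h4 : ‖α‖ * (ε * t) ≤ ‖α‖ * 1 := by gcongr
      have h5 : l * t ^ 2 / 6 * (ε * t) ≤ l * t ^ 2 / 6 * 1 := by gcongr
      have h6 : |r| ≤ 5 / 96 * l * t ^ 2 := by
        refine hrb.trans ?_
        have : (ε * t) ^ 2 ≤ 1 := pow_le_one₀ (by positivity) hx
        calc _ = 5 / 96 * l * t ^ 2 * (ε * t) ^ 2 := by ring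
          _ ≤ 5 / 96 * l * t ^ 2 * 1 := by gcongr
          _ = _ := by ring
      have : 0 ≤ l * t ^ 2 := by positivity
      linarith
    have ht4 : t ^ 4 ≤ (1 + t) ^ 4 := by gcongr; linarith
    have hr2 : |r| ≤ ε ^ 2 * (l * (1 + t) ^ 4) := by
      refine hrb.trans ?_
      calc _ = ε ^ 2 * (5 / 96 * l * t ^ 4) := by ring
        _ ≤ ε ^ 2 * (1 * l * (1 + t) ^ 4) := by gcongr; norm_num
        _ = _ := by ring
    have hy2 : ‖y‖ ≤ ε * (K * (1 + t) ^ 4) := by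
      have h1 : ‖p‖ ≤ (1 + ‖α‖ + l) * (1 + t) ^ 4 - l * (1 + t) ^ 4 + l * t ^ 3 / 6:= by
        have : ‖p‖ ≤ ‖α‖ * t + l * t ^ 3 / 6 := by
          refine (norm_sub_le _ _).trans (le_of_eq ?_)
          simp [abs_of_pos hl, htw]
        have h2 : t ≤ (1 + t) ^ 4 := by
          calc t ≤ 1 + t := by linarith
            _ ≤ _ := le_self_pow₀ (by linarith) (by norm_num)
        have := mul_le_mul_of_nonneg_left h2 (norm_nonneg α)
        have : 0 ≤ (1 + t) ^ 4 := by positivity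
        linarith
      have h2 : ‖y‖ ≤ ε * ‖p‖ + |r| := by
        refine (norm_add_le _ _).trans (le_of_eq ?_)
        simp [abs_of_pos hpos]
      have h3 : |r| ≤ ε * (5 / 96 * l * (1 + t) ^ 4) := by
        refine hrb.trans ?_
        calc _ = ε * (ε * (5 / 96 * l * t ^ 4)) := by ring
          _ ≤ ε * (1 * (5 / 96 * l * (1 + t) ^ 4)) := by gcongr
          _ = _ := by ring
      have h4 : t ^ 3 ≤ (1 + t) ^ 4 := by
        calc t ^ 3 ≤ (1 + t) ^ 3 := by gcongr; linarith
          _ ≤ _ := pow_le_pow_right₀ (by linarith) (by norm_num)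
      have h5 : ‖p‖ + 5 / 96 * l * (1 + t) ^ 4 ≤ K * (1 + t) ^ 4 := by
        have := mul_le_mul_of_nonneg_left h4 hl.le
        have : 0 ≤ l * (1 + t) ^ 4 := by positivity
        rw [hK]; linarith
      have := mul_le_mul_of_nonneg_left h5 hpos.le
      linarith
    have hexp : ‖cexp y - 1 - y‖ ≤ ‖y‖ ^ 2 * Real.exp ‖y‖ := by
      have := Complex.norm_exp_sub_sum_le_norm_mul_exp y 2
      simp [Finset.sum_range_succ] at this
      rwa [sub_sub]
    have hdecomp : fgpG l α ε w - fgpA l w - ε * (fgpA l w * p) =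
        fgpA l w * ((cexp y - 1 - y) + r) := by
      rw [hG, hy]; ring
    rw [hdecomp, norm_mul, fgpA_norm]
    have hsum : ‖(cexp y - 1 - y) + r‖ ≤
        ε ^ 2 * ((K ^ 2 * Real.exp ‖α‖ + K) * (1 + t) ^ 8 * Real.exp (l / 4 * t ^ 2)) := by
      have h1 : ‖y‖ ^ 2 * Real.exp ‖y‖ ≤
          (ε * (K * (1 + t) ^ 4)) ^ 2 * (Real.exp ‖α‖ * Real.exp (l / 4 * t ^ 2)) := by
        rw [← Real.exp_add]; gcongr
      have h2 : ‖(r : ℂ)‖ ≤ ε ^ 2 * (K * (1 + t) ^ 8 * Real.exp (l / 4 * t ^ 2)) := by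
        have e1 : 1 ≤ Real.exp (l / 4 * t ^ 2) := Real.one_le_exp (by positivity)
        rw [Complex.norm_real, Real.norm_eq_abs]
        refine hr2.trans ?_
        have : l ≤ K := by have := norm_nonneg α; linarith
        have := hpow t ht 4 (by norm_num)
        calc _ ≤ ε ^ 2 * (K * (1 + t) ^ 8) := by gcongr
          _ ≤ _ := mul_le_mul_of_nonneg_left
            (le_mul_of_one_le_right (by positivity) e1) (by positivity)
      refine (norm_add_le _ _).trans ((add_le_add (hexp.trans h1) h2).trans (le_of_eq ?_))
      ring
    calc _ ≤ Real.exp (-(l / 2 * t ^ 2)) * (ε ^ 2 * ((K ^ 2 * Real.exp ‖α‖ + K) * (1 + t) ^ 8 *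
            Real.exp (l / 4 * t ^ 2))) := by gcongr
      _ = ε ^ 2 * (K ^ 2 * Real.exp ‖α‖ + K) * ((1 + t) ^ 8 *
            (Real.exp (-(l / 2 * t ^ 2)) * Real.exp (l / 4 * t ^ 2))) := by ring
      _ = ε ^ 2 * (K ^ 2 * Real.exp ‖α‖ + K) * ((1 + t) ^ 8 * Real.exp (-(l / 4 * t ^ 2))) := by
          rw [← Real.exp_add]; congr 4; ring
      _ ≤ ε ^ 2 * (K ^ 2 * Real.exp ‖α‖ + K) * (B * Real.exp (-t)) := by
          have := hBt t ht; gcongr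
      _ = (K ^ 2 * Real.exp ‖α‖ + K) * B * ε ^ 2 * Real.exp (-t) := by ring
      _ ≤ _ := by
          gcongr
          rw [hC]
          have : 0 ≤ 1 + K * B := by positivity
          linarith
  · -- outer region
    have hx : 1 ≤ ε * t := (not_le.mp hx).le
    have hx2 : 1 ≤ ε ^ 2 * t ^ 2 := by
      rw [← mul_pow]; exact one_le_pow₀ hx
    have hGn : ‖fgpG l α ε w‖ ≤ ε ^ 2 * Real.exp (-t) := by
      have h1 : ‖fgpG l α ε w‖ ≤ Real.exp (-(3 * t)) := by
        rw [fgpG, Complex.norm_exp, Real.exp_le_exp]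
        have hlow := fgp_exp_lower (ε * w) (by rw [hxabs]; exact hx)
        rw [hxabs] at hlow
        have h2 : (ε * α * w : ℂ).re ≤ ‖α‖ * t := by
          refine (Complex.re_le_norm _).trans ?_
          simp only [norm_mul, Complex.norm_real, Real.norm_eq_abs, abs_of_pos hpos, ← htw]
          calc ε * ‖α‖ * t ≤ 1 * ‖α‖ * t := by gcongr
            _ = _ := by ring
        have h3 : (‖α‖ + 3) * t ≤ l * (Real.exp (ε * w) - 1 - ε * w) / ε ^ 2 := by
          rw [le_div_iff₀ (by positivity)]
          calc (‖α‖ + 3) * t * ε ^ 2 = (ε * (4 * (‖α‖ + 3))) * (ε * t / 4) := by ring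
            _ ≤ l * (Real.exp (ε * w) - 1 - ε * w) := by gcongr
        rw [Complex.add_re, Complex.neg_re, Complex.ofReal_re]
        linarith
      have h4 : t ^ 2 * Real.exp (-(3 * t)) ≤ Real.exp (-t) := by
        have : t ^ 2 ≤ Real.exp (2 * t) := by
          have : t ≤ Real.exp t := by linarith [Real.add_one_le_exp t]
          calc t ^ 2 ≤ Real.exp t ^ 2 := by gcongr
            _ = _ := by rw [← Real.exp_nat_mul]; norm_num
        calc _ ≤ Real.exp (2 * t) * Real.exp (-(3 * t)) := by gcongr
          _ = _ := by rw [← Real.exp_add]; congr 1; ring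
      calc _ ≤ 1 * Real.exp (-(3 * t)) := by rw [one_mul]; exact h1
        _ ≤ ε ^ 2 * t ^ 2 * Real.exp (-(3 * t)) := by gcongr
        _ = ε ^ 2 * (t ^ 2 * Real.exp (-(3 * t))) := by ring
        _ ≤ _ := by gcongr
    have hrest : ‖fgpA l w + ε * (fgpA l w * (α * w - l * w ^ 3 / 6))‖ ≤
        ε ^ 2 * (K * B * Real.exp (-t)) := by
      have e : fgpA l w + ε * (fgpA l w * (α * w - l * w ^ 3 / 6)) =
        fgpA l w * (1 + ε * (α * w - l * w ^ 3 / 6)) := by ring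
      have h1 : ‖(1 : ℂ) + ε * (α * w - l * w ^ 3 / 6)‖ ≤ K * (1 + t) ^ 3 := by
        refine (norm_add_le _ _).trans ?_
        rw [norm_one, norm_mul, Complex.norm_real, Real.norm_eq_abs, abs_of_pos hpos]
        have h2 : ε * ‖α * w - l * w ^ 3 / 6‖ ≤ 1 * ((K - 1) * (1 + t) ^ 3) := by
          have := hp w
          gcongr
        have h3 : 1 ≤ (1 + t) ^ 3 := one_le_pow₀ (by linarith)
        linarith
      rw [e, norm_mul, fgpA_norm]
      have h5 : t ^ 2 * (1 + t) ^ 3 ≤ (1 + t) ^ 8 := by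
        calc _ ≤ (1 + t) ^ 2 * (1 + t) ^ 3 := by gcongr; linarith
          _ = (1 + t) ^ 5 := by ring
          _ ≤ _ := hpow t ht 5 (by norm_num)
      calc _ ≤ Real.exp (-(l / 4 * t ^ 2)) * (K * (1 + t) ^ 3) :=
            mul_le_mul (hgl _) h1 (norm_nonneg _) (Real.exp_pos _).le
        _ = 1 * (Real.exp (-(l / 4 * t ^ 2)) * (K * (1 + t) ^ 3)) := by ring
        _ ≤ ε ^ 2 * t ^ 2 * (Real.exp (-(l / 4 * t ^ 2)) * (K * (1 + t) ^ 3)) := by gcongr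
        _ = ε ^ 2 * (K * ((t ^ 2 * (1 + t) ^ 3) * Real.exp (-(l / 4 * t ^ 2)))) := by ring
        _ ≤ ε ^ 2 * (K * ((1 + t) ^ 8 * Real.exp (-(l / 4 * t ^ 2)))) := by gcongr
        _ ≤ ε ^ 2 * (K * (B * Real.exp (-t))) := by
            have := hBt t ht; gcongr
        _ = _ := by ring
    rw [sub_sub]
    refine (norm_sub_le _ _).trans ((add_le_add hGn hrest).trans ?_)
    calc _ = (1 + K * B) * ε ^ 2 * Real.exp (-t) := by ring
      _ ≤ _ := by
        gcongr
        rw [hC]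
        have : 0 ≤ (K ^ 2 * Real.exp ‖α‖ + K) * B := by positivity
        linarith

end FGP2
section FGP3
open MeasureTheory Complex
open scoped Topology

/-- `F ε = a + ε b + O(ε² D)` with `a` even and `b` odd. -/
def FgpExp {X : Type*} [TopologicalSpace X] [Neg X] (F : ℝ → X → ℂ) (a : X → ℂ) (D : X → ℝ) :
    Prop :=
  ∃ (b : X → ℂ) (C : ℝ), 0 ≤ C ∧ Continuous a ∧ Continuous b ∧ (∀ x, a (-x) = a x) ∧
    (∀ x, b (-x) = -b x) ∧ (∀ x, ‖a x‖ ≤ C * D x) ∧ (∀ x, ‖b x‖ ≤ C * D x) ∧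
    ∀ᶠ ε : ℝ in 𝓝[>] 0, ∀ x, ‖F ε x - a x - ε * b x‖ ≤ C * ε ^ 2 * D x

lemma FgpExp.one {X : Type*} [TopologicalSpace X] [Neg X] :
    FgpExp (X := X) (fun _ _ => 1) (fun _ => 1) (fun _ => 1) := by
  refine ⟨fun _ => 0, 1, zero_le_one, continuous_const, continuous_const, by simp, by simp,
    by simp, by simp, Eventually.of_forall fun ε x => ?_⟩
  simp
  positivity

lemma FgpExp.mul {X : Type*} [TopologicalSpace X] [Neg X] {F G : ℝ → X → ℂ} {a a' : X → ℂ}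
    {D D' : X → ℝ} (hD : ∀ x, 0 ≤ D x) (hD' : ∀ x, 0 ≤ D' x)
    (h : FgpExp F a D) (h' : FgpExp G a' D') :
    FgpExp (fun ε x => F ε x * G ε x) (fun x => a x * a' x) (fun x => D x * D' x) := by
  obtain ⟨b, C, hC, ca, cb, ea, ob, na, nb, hF⟩ := h
  obtain ⟨b', C', hC', ca', cb', ea', ob', na', nb', hG⟩ := h'
  refine ⟨fun x => a x * b' x + b x * a' x, 6 * (C * C'), by positivity, by fun_prop, by fun_prop,
    fun x => by simp only [ea, ea'], fun x => by simp only [ea, ea', ob, ob']; ring, ?_, ?_, ?_⟩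
  · intro x
    have := hD x; have := hD' x
    have : 0 ≤ C * C' * (D x * D' x) := by positivity
    rw [norm_mul]
    have := mul_le_mul (na x) (na' x) (norm_nonneg _) (by positivity)
    linarith
  · intro x
    have := hD x; have := hD' x
    have : 0 ≤ C * C' * (D x * D' x) := by positivity
    refine (norm_add_le _ _).trans ?_
    rw [norm_mul, norm_mul]
    have := mul_le_mul (na x) (nb' x) (norm_nonneg _) (by positivity)
    have := mul_le_mul (nb x) (na' x) (norm_nonneg _) (by positivity)
    linarith
  · have hev : ∀ᶠ ε : ℝ in 𝓝[>] 0, ε < 1 :=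
      mem_nhdsWithin_of_mem_nhds (Iio_mem_nhds (by norm_num))
    filter_upwards [hF, hG, hev, self_mem_nhdsWithin] with ε h1 h2 h3 h4 x
    have h4 : 0 < ε := h4
    have d1 := hD x
    have d2 := hD' x
    have key : F ε x * G ε x - a x * a' x - ε * (a x * b' x + b x * a' x) =
      (F ε x - a x - ε * b x) * (G ε x - a' x - ε * b' x)
      + (F ε x - a x - ε * b x) * a' x + ε * ((F ε x - a x - ε * b x) * b' x)
      + a x * (G ε x - a' x - ε * b' x) + ε * (b x * (G ε x - a' x - ε * b' x))
      + ε * (ε * (b x * b' x)) := by ring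
    rw [key]
    have hn : ‖(ε : ℂ)‖ = ε := by rw [Complex.norm_real, Real.norm_eq_abs, abs_of_pos h4]
    have r1 := h1 x
    have r2 := h2 x
    set R := F ε x - a x - ε * b x
    set R' := G ε x - a' x - ε * b' x
    have hQ : 0 ≤ C * C' * (D x * D' x) := by positivity
    have e2 : ε ^ 2 ≤ 1 := pow_le_one₀ h4.le h3.le
    have t1 : ‖R * R'‖ ≤ C * C' * (D x * D' x) * ε ^ 2 := by
      rw [norm_mul]
      calc _ ≤ (C * ε ^ 2 * D x) * (C' * ε ^ 2 * D' x) :=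
            mul_le_mul r1 r2 (norm_nonneg _) (by positivity)
        _ = C * C' * (D x * D' x) * ε ^ 2 * ε ^ 2 := by ring
        _ ≤ _ := mul_le_of_le_one_right (by positivity) e2
    have t2 : ‖R * a' x‖ ≤ C * C' * (D x * D' x) * ε ^ 2 := by
      rw [norm_mul]
      calc _ ≤ (C * ε ^ 2 * D x) * (C' * D' x) :=
            mul_le_mul r1 (na' x) (norm_nonneg _) (by positivity)
        _ = _ := by ring
    have t3 : ‖ε * (R * b' x)‖ ≤ C * C' * (D x * D' x) * ε ^ 2 := by
      rw [norm_mul, norm_mul, hn]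
      calc _ ≤ ε * ((C * ε ^ 2 * D x) * (C' * D' x)) := by
            have := mul_le_mul r1 (nb' x) (norm_nonneg _) (by positivity)
            gcongr
        _ = C * C' * (D x * D' x) * ε ^ 2 * ε := by ring
        _ ≤ _ := mul_le_of_le_one_right (by positivity) h3.le
    have t4 : ‖a x * R'‖ ≤ C * C' * (D x * D' x) * ε ^ 2 := by
      rw [norm_mul]
      calc _ ≤ (C * D x) * (C' * ε ^ 2 * D' x) :=
            mul_le_mul (na x) r2 (norm_nonneg _) (by positivity)
        _ = _ := by ring
    have t5 : ‖ε * (b x * R')‖ ≤ C * C' * (D x * D' x) * ε ^ 2 := by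
      rw [norm_mul, norm_mul, hn]
      calc _ ≤ ε * ((C * D x) * (C' * ε ^ 2 * D' x)) := by
            have := mul_le_mul (nb x) r2 (norm_nonneg _) (by positivity)
            gcongr
        _ = C * C' * (D x * D' x) * ε ^ 2 * ε := by ring
        _ ≤ _ := mul_le_of_le_one_right (by positivity) h3.le
    have t6 : ‖ε * (ε * (b x * b' x))‖ ≤ C * C' * (D x * D' x) * ε ^ 2 := by
      rw [norm_mul, norm_mul, norm_mul, hn]
      calc _ ≤ ε * (ε * ((C * D x) * (C' * D' x))) := by
            have := mul_le_mul (nb x) (nb' x) (norm_nonneg _) (by positivity)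
            gcongr
        _ = _ := by ring
    refine (norm_add_le_of_le (norm_add_le_of_le (norm_add_le_of_le (norm_add_le_of_le
      (norm_add_le_of_le t1 t2) t3) t4) t5) t6).trans (le_of_eq ?_)
    ring

lemma FgpExp.prod {X ι : Type*} [TopologicalSpace X] [Neg X] {F : ι → ℝ → X → ℂ}
    {a : ι → X → ℂ} {D : ι → X → ℝ} (hD : ∀ i x, 0 ≤ D i x)
    (h : ∀ i, FgpExp (F i) (a i) (D i)) (s : Finset ι) :
    FgpExp (fun ε x => ∏ i ∈ s, F i ε x) (fun x => ∏ i ∈ s, a i x) (fun x => ∏ i ∈ s, D i x) := by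
  classical
  induction s using Finset.induction_on with
  | empty => simpa using FgpExp.one
  | insert i s hi ih =>
    simp only [prod_insert hi]
    exact FgpExp.mul (hD i) (fun x => prod_nonneg fun j _ => hD j x) (h i) ih

lemma FgpExp.integral {n : ℕ} {F : ℝ → (Fin n → ℝ) → ℂ} {a : (Fin n → ℝ) → ℂ}
    {D : (Fin n → ℝ) → ℝ} (h : FgpExp F a D) (hF : ∀ ε, Continuous (F ε)) (hD : Integrable D) :
    ∃ C : ℝ, ∀ᶠ ε : ℝ in 𝓝[>] 0, ‖(∫ x, F ε x) - ∫ x, a x‖ ≤ C * ε ^ 2 := by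
  obtain ⟨b, C, hC, ca, cb, ea, ob, na, nb, hFe⟩ := h
  have ia : Integrable a := (hD.const_mul C).mono' ca.aestronglyMeasurable (Eventually.of_forall na)
  have ib : Integrable b := (hD.const_mul C).mono' cb.aestronglyMeasurable (Eventually.of_forall nb)
  have b0 : ∫ x, b x = 0 := by
    have h1 := integral_neg_eq_self b volume
    simp_rw [ob, integral_neg] at h1
    linear_combination -(1/2) * h1
  refine ⟨C * ∫ x, D x, ?_⟩
  filter_upwards [hFe] with ε hε
  have iR : Integrable (fun x => F ε x - a x - ε * b x) := by
    refine (hD.const_mul (C * ε ^ 2)).mono' ?_ (Eventually.of_forall hε)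
    have := hF ε
    exact Continuous.aestronglyMeasurable (by fun_prop)
  have e : ∫ x, F ε x = (∫ x, (F ε x - a x - ε * b x)) + ((∫ x, a x) + ∫ x, ε * b x) := by
    rw [← integral_add ia (ib.const_mul _),
      ← integral_add (g := fun x => a x + ε * b x) iR (ia.add (ib.const_mul _))]
    congr 1; ext x; ring
  rw [e, integral_const_mul, b0, mul_zero, add_zero, add_sub_cancel_right]
  calc _ ≤ ∫ x, C * ε ^ 2 * D x := norm_integral_le_of_norm_le (hD.const_mul _)
        (Eventually.of_forall hε)
    _ = _ := by rw [integral_const_mul]; ring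

lemma fgp_integrable_exp_abs : Integrable (fun w : ℝ => Real.exp (-|w|)) := by
  refine (integrable_inv_one_add_sq.const_mul 2).mono'
    (Continuous.aestronglyMeasurable (by fun_prop)) (Eventually.of_forall fun w => ?_)
  have h := Real.quadratic_le_exp_of_nonneg (abs_nonneg w)
  rw [Real.norm_eq_abs, abs_of_pos (Real.exp_pos _), Real.exp_neg, ← div_eq_mul_inv,
    le_div_iff₀ (by positivity), inv_mul_le_iff₀ (Real.exp_pos _), ← sq_abs w]
  linarith [abs_nonneg w]

end FGP3

section FGP4
open MeasureTheory Complex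
open scoped Topology

/-- Coordinates on the hyperplane `∑ λ_j w_j = 0`. -/
noncomputable def fgpW {n : ℕ} (lam : Fin (n+1) → ℝ) (x : Fin n → ℝ) : Fin (n+1) → ℝ :=
  Fin.cons (-(∑ j, lam (Fin.succ j) * x j) / lam 0) x

lemma fgpW_continuous {n : ℕ} (lam : Fin (n+1) → ℝ) (j : Fin (n+1)) :
    Continuous (fun x => fgpW lam x j) := by
  refine Fin.cases ?_ (fun i => ?_) j
  · simp only [fgpW, Fin.cons_zero]; fun_prop
  · simp only [fgpW, Fin.cons_succ]; fun_prop

lemma fgpW_neg {n : ℕ} (lam : Fin (n+1) → ℝ) (x : Fin n → ℝ) (j : Fin (n+1)) :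
    fgpW lam (-x) j = - fgpW lam x j := by
  refine Fin.cases ?_ (fun i => ?_) j
  · simp [fgpW, neg_div]
  · simp [fgpW]

lemma fgpW_sum {n : ℕ} (lam : Fin (n+1) → ℝ) (h : 0 < lam 0) (x : Fin n → ℝ) :
    ∑ j, lam j * fgpW lam x j = 0 := by
  rw [Fin.sum_univ_succ]
  simp only [fgpW, Fin.cons_zero, Fin.cons_succ]
  field_simp
  ring

lemma fgpG_continuous (l : ℝ) (α : ℂ) (ε : ℝ) : Continuous (fgpG l α ε) := by
  unfold fgpG; fun_prop

lemma fgpA_continuous (l : ℝ) : Continuous (fgpA l) := by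
  unfold fgpA; fun_prop

lemma fgp_factor (l : ℝ) (α : ℂ) {n : ℕ} (lam : Fin (n+1) → ℝ) (hl : 0 < l) (j : Fin (n+1)) :
    FgpExp (fun ε x => fgpG l α ε (fgpW lam x j)) (fun x => fgpA l (fgpW lam x j))
      (fun x => Real.exp (-|fgpW lam x j|)) := by
  obtain ⟨C, hC, h1, h2, h3⟩ := fgp_single l hl α
  have hW := fgpW_continuous lam j
  refine ⟨fun x => fgpA l (fgpW lam x j) * (α * (fgpW lam x j : ℝ) - l * (fgpW lam x j : ℝ) ^ 3 / 6),
    C, hC, (fgpA_continuous l).comp hW, ?_, ?_, ?_, fun x => h1 _, fun x => h2 _, ?_⟩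
  · have := (fgpA_continuous l).comp hW
    simp only [Function.comp_def] at this
    fun_prop
  · intro x
    simp only [fgpW_neg, fgpA]
    push_cast
    ring_nf
  · intro x
    simp only [fgpW_neg, fgpA]
    push_cast
    rw [neg_sq]
    ring
  · filter_upwards [h3] with ε h x
    exact h _

lemma fgp_laplace {n : ℕ} (lam : Fin (n+1) → ℝ) (hlam : ∀ j, 0 < lam j) (α : Fin (n+1) → ℂ) :
    ∃ C : ℝ, ∀ᶠ ε : ℝ in 𝓝[>] 0,
      ‖(∫ x : Fin n → ℝ, ∏ j, fgpG (lam j) (α j) ε (fgpW lam x j)) -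
        ∫ x : Fin n → ℝ, ∏ j, fgpA (lam j) (fgpW lam x j)‖ ≤ C * ε ^ 2 := by
  have h := FgpExp.prod (F := fun (j : Fin (n+1)) ε x => fgpG (lam j) (α j) ε (fgpW lam x j))
    (a := fun j x => fgpA (lam j) (fgpW lam x j)) (D := fun j x => Real.exp (-|fgpW lam x j|))
    (fun i x => (Real.exp_pos _).le) (fun j => fgp_factor (lam j) (α j) lam (hlam j) j) univ
  refine h.integral (fun ε => ?_) ?_
  · exact continuous_finsetProd _ fun j _ =>
      (fgpG_continuous (lam j) (α j) ε).comp (fgpW_continuous lam j)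
  · have hi : Integrable (fun x : Fin n → ℝ => ∏ j, Real.exp (-|x j|)) :=
      Integrable.fintype_prod (fun j : Fin n => fgp_integrable_exp_abs)
    refine hi.mono' (Continuous.aestronglyMeasurable ?_) (Eventually.of_forall fun x => ?_)
    · exact continuous_finsetProd _ fun j _ => by
        have := fgpW_continuous lam j
        fun_prop
    · rw [Real.norm_eq_abs, abs_of_nonneg (prod_nonneg fun j _ => (Real.exp_pos _).le),
        Fin.prod_univ_succ]
      simp only [fgpW, Fin.cons_succ]
      refine mul_le_of_le_one_left (prod_nonneg fun j _ => (Real.exp_pos _).le) ?_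
      rw [Real.exp_le_one_iff]
      simp

lemma fgpA_integrable (l : ℝ) (hl : 0 < l) : Integrable (fgpA l) := by
  have := integrable_cexp_neg_mul_sq (b := ((l / 2 : ℝ) : ℂ)) (by rw [Complex.ofReal_re]; positivity)
  exact this

lemma fgp_gauss_fourier (l : ℝ) (hl : 0 < l) (y : ℝ) :
    (Real.pi / ((l / 2 : ℝ) : ℂ)) ^ (1 / 2 : ℂ) * cexp (-(y : ℂ) ^ 2 / (4 * ((l / 2 : ℝ) : ℂ))) =
      ∫ u : ℝ, fgpA l u * cexp (I * y * u) := by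
  rw [← fourierIntegral_gaussian (b := ((l / 2 : ℝ) : ℂ)) (by rw [Complex.ofReal_re]; positivity)]
  congr 1
  ext u
  rw [mul_comm]
  rfl

lemma fgp_gauss_const {n : ℕ} (lam : Fin (n+1) → ℝ) (hlam : ∀ j, 0 < lam j) :
    ((2 * Real.pi / lam 0 : ℝ) : ℂ) * ∫ x : Fin n → ℝ, ∏ j, fgpA (lam j) (fgpW lam x j) =
      (∏ j, (Real.pi / ((lam j / 2 : ℝ) : ℂ)) ^ (1 / 2 : ℂ)) *
        (Real.pi / (((∑ j, lam j) / 2 : ℝ) : ℂ)) ^ (1 / 2 : ℂ) := by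
  have hL : 0 < ∑ j, lam j := sum_pos (fun j _ => hlam j) univ_nonempty
  have h := fgp_conv n lam hlam (fun j => fgpA (lam j))
    (fun j y => (Real.pi / ((lam j / 2 : ℝ) : ℂ)) ^ (1 / 2 : ℂ) *
      cexp (-(y : ℂ) ^ 2 / (4 * ((lam j / 2 : ℝ) : ℂ))))
    (fun j => fgpA_continuous _) (fun j => fgpA_integrable _ (hlam j))
    (fun j y => fgp_gauss_fourier _ (hlam j) y) ?_ 0
  · have e : ∀ x : Fin n → ℝ, ∏ j, fgpA (lam j) (fgpW lam x j) =
        (∏ j, fgpA (lam (Fin.succ j)) (x j)) *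
          fgpA (lam 0) ((0 - ∑ j, lam (Fin.succ j) * x j) / lam 0) := by
      intro x
      rw [Fin.prod_univ_succ, mul_comm]
      simp [fgpW]
    simp_rw [e]
    rw [← h]
    rw [← integral_gaussian_complex (b := (((∑ j, lam j) / 2 : ℝ) : ℂ))
      (by rw [Complex.ofReal_re]; positivity), ← integral_const_mul]
    congr 1
    ext z
    rw [prod_mul_distrib, ← Complex.exp_sum]
    simp only [ofReal_zero, mul_zero, zero_mul, neg_zero, Complex.exp_zero, mul_one]
    congr 2
    push_cast
    rw [sum_div, neg_mul, sum_mul, ← sum_neg_distrib]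
    refine sum_congr rfl fun j _ => ?_
    have : (lam j : ℂ) ≠ 0 := by exact_mod_cast (hlam j).ne'
    field_simp
    ring
  · have h0 := hlam 0
    have := (integrable_cexp_neg_mul_sq (b := ((1 / (4 * (lam 0 / 2)) : ℝ) : ℂ))
      (by rw [Complex.ofReal_re]; positivity)).const_mul
        ((Real.pi / ((lam 0 / 2 : ℝ) : ℂ)) ^ (1 / 2 : ℂ))
    refine this.congr (Eventually.of_forall fun y => ?_)
    simp only
    congr 2
    push_cast
    ring

lemma fgp_factor_eq (l : ℝ) (hl : 0 < l) (α : ℂ) (ν ε w : ℝ) (hε : ε ^ 2 = Real.exp (-ν))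
    (hε0 : 0 < ε) :
    fgpF α (ε * w + (ν + Real.log l)) =
      cexp (-(l * Real.exp ν : ℝ) + α * (ν + Real.log l : ℝ)) *
        cexp (-(ε * Real.exp ν * (l * w) : ℝ)) * fgpG l α ε w := by
  rw [fgpF, fgpG, ← Complex.exp_add, ← Complex.exp_add]
  congr 1
  have h1 : Real.exp (ε * w + (ν + Real.log l)) = l * Real.exp ν * Real.exp (ε * w) := by
    rw [Real.exp_add, Real.exp_add, Real.exp_log hl]; ring
  have h2 : l * (Real.exp (ε * w) - 1 - ε * w) / ε ^ 2 =
      l * Real.exp ν * (Real.exp (ε * w) - 1 - ε * w) := by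
    rw [hε, Real.exp_neg]; field_simp
  rw [h1, h2]
  push_cast
  ring

lemma fgp_subst {n : ℕ} (lam : Fin (n+1) → ℝ) (hlam : ∀ j, 0 < lam j) (α : Fin (n+1) → ℂ)
    (T ν ε : ℝ) (hν : ∑ j, lam j * (ν + Real.log (lam j)) = T) (hε : ε ^ 2 = Real.exp (-ν))
    (hε0 : 0 < ε) :
    ∫ x : Fin n → ℝ, (∏ j, fgpF (α (Fin.succ j)) (x j)) *
        fgpF (α 0) ((T - ∑ j, lam (Fin.succ j) * x j) / lam 0) =
      ((ε ^ n : ℝ) : ℂ) * ((∏ j, cexp (-(lam j * Real.exp ν : ℝ) +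
        α j * (ν + Real.log (lam j) : ℝ))) *
        ∫ x : Fin n → ℝ, ∏ j, fgpG (lam j) (α j) ε (fgpW lam x j)) := by
  set H : (Fin n → ℝ) → ℂ := fun x => (∏ j, fgpF (α (Fin.succ j)) (x j)) *
        fgpF (α 0) ((T - ∑ j, lam (Fin.succ j) * x j) / lam 0) with hH
  set c : Fin n → ℝ := fun j => ν + Real.log (lam (Fin.succ j)) with hc
  have h0 := hlam 0
  have s1 : ∫ x, H x = ((ε ^ n : ℝ) : ℂ) * ∫ x, H (ε • x + c) := by
    rw [← integral_add_right_eq_self H c]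
    have := Measure.integral_comp_smul volume (fun x => H (x + c)) ε
    rw [this, Complex.real_smul, ← mul_assoc, ← Complex.ofReal_mul, Module.finrank_fin_fun,
      abs_of_pos (by positivity), mul_inv_cancel₀ (by positivity)]
    simp
  rw [s1]
  congr 1
  rw [← integral_const_mul]
  congr 1
  ext x
  have e0 : (T - ∑ j, lam (Fin.succ j) * (ε • x + c) j) / lam 0 =
      ε * fgpW lam x 0 + (ν + Real.log (lam 0)) := by
    simp only [fgpW, Fin.cons_zero]
    rw [← hν, Fin.sum_univ_succ]
    simp only [Pi.add_apply, Pi.smul_apply, smul_eq_mul, hc, mul_add, sum_add_distrib]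
    have : ∑ j, lam (Fin.succ j) * (ε * x j) = ε * ∑ j, lam (Fin.succ j) * x j := by
      rw [mul_sum]; exact sum_congr rfl fun j _ => by ring
    rw [this]
    field_simp
    ring
  have e1 : H (ε • x + c) = ∏ j, fgpF (α j) (ε * fgpW lam x j + (ν + Real.log (lam j))) := by
    rw [Fin.prod_univ_succ, hH]
    simp only
    rw [e0, mul_comm]
    simp [fgpW, hc]
  rw [e1]
  simp_rw [fun j => fgp_factor_eq (lam j) (hlam j) (α j) ν ε (fgpW lam x j) hε hε0]
  rw [prod_mul_distrib, prod_mul_distrib, ← Complex.exp_sum univ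
    (fun j => (-(ε * Real.exp ν * (lam j * fgpW lam x j) : ℝ) : ℂ))]
  have : ∑ j, (-(ε * Real.exp ν * (lam j * fgpW lam x j) : ℝ) : ℂ) = 0 := by
    rw [sum_neg_distrib, ← Complex.ofReal_sum, ← mul_sum, fgpW_sum lam h0]
    simp
  rw [this, Complex.exp_zero, mul_one]

lemma fgp_sqrt (l : ℝ) (hl : 0 < l) :
    (Real.pi / ((l / 2 : ℝ) : ℂ)) ^ (1 / 2 : ℂ) =
      cexp (((Real.log (2 * Real.pi) : ℝ) - (Real.log l : ℝ)) / 2) := by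
  have h : (Real.pi / ((l / 2 : ℝ) : ℂ)) = ((2 * Real.pi / l : ℝ) : ℂ) := by
    push_cast
    have : (l : ℂ) ≠ 0 := by exact_mod_cast hl.ne'
    field_simp
  have hp : 0 < 2 * Real.pi / l := by positivity
  rw [h, cpow_def_of_ne_zero (by exact_mod_cast hp.ne'), ← Complex.ofReal_log hp.le,
    Real.log_div (by positivity) hl.ne']
  push_cast
  congr 1
  ring

lemma fgp_const {n : ℕ} (lam : Fin (n+1) → ℝ) (hlam : ∀ j, 0 < lam j) (α : Fin (n+1) → ℂ)
    (T Λ ν ε : ℝ) (hΛ : Λ = ∑ j, lam j) (A : ℂ) (hA : A = ∑ j, α j)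
    (hν : ν = (T - ∑ j, lam j * Real.log (lam j)) / Λ) (hε : ε = Real.exp (-ν / 2)) :
    ((((2 * Real.pi) ^ ((((n + 1 : ℕ) : ℝ) + 1) / 2) * Λ ^ (-(1 / 2) : ℝ) : ℝ) : ℂ) *
      ∏ j, ((lam j : ℂ) ^
        (-(1 / 2 : ℂ) + α j + (lam j : ℂ) * ((((n + 1 : ℕ) : ℂ) - 1) / 2 - A) / (Λ : ℂ)))) *
            Complex.exp
              (-((Λ * Real.exp (T / Λ) * ∏ j, lam j ^ (-(lam j) / Λ) : ℝ) : ℂ) +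
                (T : ℂ) * (A - (((n + 1 : ℕ) : ℂ) - 1) / 2) / (Λ : ℂ)) =
    ((∏ j, (Real.pi / ((lam j / 2 : ℝ) : ℂ)) ^ (1 / 2 : ℂ)) *
        (Real.pi / (((∑ j, lam j) / 2 : ℝ) : ℂ)) ^ (1 / 2 : ℂ)) * (((ε ^ n : ℝ) : ℂ) *
        ∏ j, cexp (-(lam j * Real.exp ν : ℝ) + α j * (ν + Real.log (lam j) : ℝ))) := by
  have hL : 0 < Λ := by rw [hΛ]; exact sum_pos (fun j _ => hlam j) univ_nonempty
  have hLc : (Λ : ℂ) ≠ 0 := by exact_mod_cast hL.ne'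
  rw [← hΛ]
  set S := ∑ j, lam j * Real.log (lam j) with hS
  have p1 : Real.exp (T / Λ) * ∏ j, lam j ^ (-(lam j) / Λ) = Real.exp ν := by
    simp_rw [fun j => Real.rpow_def_of_pos (hlam j)]
    rw [← Real.exp_sum, ← Real.exp_add, hν, hS]
    congr 1
    rw [sub_div, sum_div, sub_eq_add_neg, ← sum_neg_distrib]
    congr 1
    exact sum_congr rfl fun j _ => by ring
  rw [mul_assoc Λ, p1, fgp_sqrt Λ hL]
  simp_rw [fun j => fgp_sqrt (lam j) (hlam j)]
  have p2 : ∀ j (w : ℂ), (lam j : ℂ) ^ w = cexp ((Real.log (lam j) : ℝ) * w) := by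
    intro j w
    rw [cpow_def_of_ne_zero (by exact_mod_cast (hlam j).ne'), ← Complex.ofReal_log (hlam j).le]
  simp_rw [p2]
  rw [Real.rpow_def_of_pos (by positivity : 0 < 2 * Real.pi), Real.rpow_def_of_pos hL, hε,
    ← Real.exp_nat_mul]
  simp only [← Complex.exp_sum, ← Real.exp_add, Complex.ofReal_exp, ← Complex.exp_add]
  congr 1
  push_cast
  have q1 : ∑ j, (Real.log (lam j) : ℂ) * (-(1 / 2 : ℂ) + α j +
      (lam j : ℂ) * (((n : ℂ) + 1 - 1) / 2 - A) / (Λ : ℂ)) =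
      -(1 / 2) * (∑ j, (Real.log (lam j) : ℂ)) + (∑ j, α j * (Real.log (lam j) : ℂ)) +
        (S : ℂ) * ((n / 2 - A) / Λ) := by
    rw [hS]
    push_cast
    rw [mul_sum, sum_mul, ← sum_add_distrib, ← sum_add_distrib]
    refine sum_congr rfl fun j _ => ?_
    ring
  have q2 : ∑ j, (((Real.log (2 * Real.pi) : ℝ) : ℂ) - (Real.log (lam j) : ℂ)) / 2 =
      (n + 1) * ((Real.log (2 * Real.pi) : ℝ) : ℂ) / 2 -
        (1 / 2) * (∑ j, (Real.log (lam j) : ℂ)) := by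
    rw [← sum_div, sum_sub_distrib]
    simp
    ring
  have q3 : ∑ j, (-((lam j : ℂ) * cexp ν) + α j * ((ν : ℂ) + (Real.log (lam j) : ℂ))) =
      -(Λ : ℂ) * cexp ν + A * ν + ∑ j, α j * (Real.log (lam j) : ℂ) := by
    rw [hΛ, hA]
    push_cast
    rw [neg_mul, sum_mul, sum_mul, ← sum_neg_distrib, ← sum_add_distrib, ← sum_add_distrib]
    refine sum_congr rfl fun j _ => ?_
    ring
  rw [q1, q2, q3]
  have q4 : (ν : ℂ) * Λ = T - S := by
    rw [hν]; push_cast; field_simp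
  have q5 : (T : ℂ) = ν * Λ + S := by rw [q4]; ring
  rw [q5]
  field_simp
  ring

end FGP4



/-- **Fourier transform of a product of Gamma functions.**
With `Λ = ∑ λⱼ`, `A = ∑ αⱼ` and
`C_k = (2π)^{(k+1)/2} Λ^{−1/2} ∏ λⱼ^{−1/2 + αⱼ + λⱼ((k−1)/2 − A)/Λ}`,
as `T → +∞`,
`∫ (∏ Γ(αⱼ + iλⱼz)) e^{-iTz} dz
  = C_k exp(−Λ e^{T/Λ} ∏ λⱼ^{−λⱼ/Λ} + T(A − (k−1)/2)/Λ) (1 + O(e^{−T/Λ}))`. -/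
theorem fourier_transform_Gamma_prod (k : ℕ) (hk : 1 ≤ k)
    (lam : Fin k → ℝ) (hlam : ∀ j, 0 < lam j)
    (α : Fin k → ℂ) (hα : ∀ j, 0 < (α j).re)
    (Λ : ℝ) (hΛ : Λ = ∑ j, lam j)
    (A : ℂ) (hA : A = ∑ j, α j)
    (Ck : ℂ)
    (hCk : Ck = (((2 * Real.pi) ^ (((k : ℝ) + 1) / 2) * Λ ^ (-(1 / 2) : ℝ) : ℝ) : ℂ) *
      ∏ j, ((lam j : ℂ) ^
        (-(1 / 2 : ℂ) + α j + (lam j : ℂ) * (((k : ℂ) - 1) / 2 - A) / (Λ : ℂ)))) :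
    ∃ E : ℝ → ℂ, (E =O[atTop] fun T : ℝ => Real.exp (-T / Λ)) ∧
      ∀ T : ℝ,
        (∫ z : ℝ, (∏ j, Complex.Gamma (α j + Complex.I * lam j * z)) *
            Complex.exp (-(Complex.I * T * z))) =
          Ck *
            Complex.exp
              (-((Λ * Real.exp (T / Λ) * ∏ j, lam j ^ (-(lam j) / Λ) : ℝ) : ℂ) +
                (T : ℂ) * (A - ((k : ℂ) - 1) / 2) / (Λ : ℂ)) *
            (1 + E T) := by
  obtain ⟨n, rfl⟩ : ∃ n, k = n + 1 := ⟨k - 1, by omega⟩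
  have hL : 0 < Λ := by rw [hΛ]; exact sum_pos (fun j _ => hlam j) univ_nonempty
  set S := ∑ j, lam j * Real.log (lam j) with hS
  set V : ℂ := (∏ j, (Real.pi / ((lam j / 2 : ℝ) : ℂ)) ^ (1 / 2 : ℂ)) *
        (Real.pi / (((∑ j, lam j) / 2 : ℝ) : ℂ)) ^ (1 / 2 : ℂ) with hV
  have hV0 : V ≠ 0 := by
    rw [hV, ← hΛ, fgp_sqrt Λ hL]
    refine mul_ne_zero (prod_ne_zero_iff.mpr fun j _ => ?_) (Complex.exp_ne_zero _)
    rw [fgp_sqrt _ (hlam j)]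
    exact Complex.exp_ne_zero _
  have hgc := fgp_gauss_const lam hlam
  rw [← hV] at hgc
  set a := ∫ x : Fin n → ℝ, ∏ j, fgpA (lam j) (fgpW lam x j) with ha
  have ha0 : a ≠ 0 := by
    intro h
    rw [h, mul_zero] at hgc
    exact hV0 hgc.symm
  set G : ℝ → ℂ := fun ε => ∫ x : Fin n → ℝ, ∏ j, fgpG (lam j) (α j) ε (fgpW lam x j) with hG
  set ν : ℝ → ℝ := fun T => (T - S) / Λ with hν
  set e : ℝ → ℝ := fun T => Real.exp (-ν T / 2) with he
  have he2 : ∀ T, e T ^ 2 = Real.exp (-ν T) := by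
    intro T
    rw [he, ← Real.exp_nat_mul]
    congr 1
    push_cast
    ring
  refine ⟨fun T => G (e T) / a - 1, ?_, fun T => ?_⟩
  · obtain ⟨C, hC⟩ := fgp_laplace lam hlam α
    have hνt : Tendsto ν atTop atTop :=
      (tendsto_atTop_add_const_right atTop (-S) tendsto_id).atTop_div_const hL
    have het : Tendsto e atTop (nhdsWithin 0 (Set.Ioi 0)) := by
      refine tendsto_nhdsWithin_iff.mpr ⟨?_, Eventually.of_forall fun T => Real.exp_pos _⟩
      refine Real.tendsto_exp_atBot.comp ?_
      have h1 := tendsto_neg_atTop_atBot.comp (hνt.atTop_div_const (by norm_num : (0:ℝ) < 2))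
      refine h1.congr fun T => ?_
      simp only [Function.comp_apply]
      ring
    refine Asymptotics.IsBigO.of_bound (C / ‖a‖ * Real.exp (S / Λ)) ?_
    filter_upwards [het.eventually hC] with T hT
    have e1 : G (e T) / a - 1 = (G (e T) - a) / a := by field_simp
    rw [e1, norm_div, Real.norm_eq_abs, abs_of_pos (Real.exp_pos _)]
    calc _ ≤ C * e T ^ 2 / ‖a‖ := by gcongr
      _ = _ := by
        rw [he2, mul_assoc, ← Real.exp_add, mul_div_right_comm]
        congr 2
        rw [hν]
        ring
  · have hsum : ∑ j, lam j * (ν T + Real.log (lam j)) = T := by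
      simp_rw [mul_add]
      rw [sum_add_distrib, ← sum_mul, ← hΛ, ← hS, hν]
      field_simp
      ring
    have hconv := fgp_conv n lam hlam (fun j => fgpF (α j))
      (fun j y => Complex.Gamma (α j + Complex.I * y)) (fun j => fgpF_continuous _)
      (fun j => fgpF_integrable _ (hα j)) (fun j y => fgp_Gamma_fourier _ (hα j) y)
      (fgp_Gamma_integrable _ (hα 0)) T
    have hconst := fgp_const lam hlam α T Λ (ν T) (e T) hΛ A hA rfl rfl
    have hsub := fgp_subst lam hlam α T (ν T) (e T) hsum (he2 T) (Real.exp_pos _)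
    rw [hCk, hconst, ← hV, ← hgc]
    have hl : (∫ z : ℝ, (∏ j, Complex.Gamma (α j + Complex.I * lam j * z)) *
            Complex.exp (-(Complex.I * T * z))) =
        ∫ z : ℝ, (∏ j, Complex.Gamma (α j + Complex.I * ((lam j * z : ℝ) : ℂ))) *
            Complex.exp (-(Complex.I * T * z)) := by
      congr 1
      ext z
      congr 1
      refine prod_congr rfl fun j _ => ?_
      congr 1
      push_cast
      ring
    have hGe : (∫ x : Fin n → ℝ, ∏ j, fgpG (lam j) (α j) (e T) (fgpW lam x j)) = G (e T) := rfl
    rw [hl, hconv, hsub, hGe, add_sub_cancel]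
    generalize (∏ j, Complex.exp (-((lam j * Real.exp (ν T) : ℝ) : ℂ) +
      α j * ((ν T + Real.log (lam j) : ℝ) : ℂ))) = P
    generalize G (e T) = g
    field_simp
end

section
/- Let Q > 0, Λ' > 0, B₁ ∈ ℝ, B₂ ∈ ℂ, and let h : ℝ → ℂ be a measurable function with |h(ε)| ≤ K ε² for all |ε| ≤ 1, for some constant K. Then as T → +∞, ∫_{−e^{−T/(3Λ')}}^{e^{−T/(3Λ')}} exp(−ε² Q e^{T/Λ'} (1 + B₁ ε + h(ε)) + B₂ ε) dε = √(π/Q) · e^{−T/(2Λ')} · (1 + O(e^{−T/Λ'})). -/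
open Filter

open MeasureTheory in
lemma aux_exp_cube (x : ℝ) (hx : 0 ≤ x) :
    Real.exp (-x) * (1 + x) ^ 3 ≤ 216 * Real.exp (-x / 2) := by
  have h1 : 1 + x ≤ 6 * Real.exp (x / 6) := by
    have := Real.add_one_le_exp (x / 6)
    linarith
  have h2 : (1 + x) ^ 3 ≤ (6 * Real.exp (x / 6)) ^ 3 := by gcongr
  have h3 : (6 * Real.exp (x / 6)) ^ 3 = 216 * Real.exp (x / 2) := by
    rw [mul_pow, ← Real.exp_nat_mul]
    norm_num
    ring_nf
  calc Real.exp (-x) * (1 + x) ^ 3 ≤ Real.exp (-x) * (216 * Real.exp (x / 2)) := by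
        rw [← h3]; gcongr
    _ = 216 * (Real.exp (-x) * Real.exp (x / 2)) := by ring
    _ = _ := by rw [← Real.exp_add]; ring_nf

lemma aux_exp_two (w : ℂ) : ‖Complex.exp w - 1 - w‖ ≤ ‖w‖ ^ 2 * Real.exp ‖w‖ := by
  have := Complex.norm_exp_sub_sum_le_norm_mul_exp w 2
  simpa [Finset.sum_range_succ, sub_sub] using this

/-- pointwise bound inside -/
lemma aux_inside (Q : ℝ) (hQ : 0 < Q) (B₁ : ℝ) (B₂ : ℂ) (K : ℝ) (hK0 : 0 ≤ K)
    (r ε : ℝ) (hr : 0 < r) (hr1 : r ≤ 1) (hε : |ε| ≤ r) (z : ℂ) (hz : ‖z‖ ≤ K * ε ^ 2) :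
    ‖Complex.exp (-((ε ^ 2 * Q * (r ^ 3)⁻¹ : ℝ) : ℂ) * (1 + (B₁ : ℂ) * (ε : ℂ) + z) + B₂ * ε)
      - ((Real.exp (-(Q * (r ^ 3)⁻¹) * ε ^ 2) : ℝ) : ℂ) *
        (-((ε ^ 2 * Q * (r ^ 3)⁻¹ : ℝ) : ℂ) * (B₁ * ε) + B₂ * ε)
      - ((Real.exp (-(Q * (r ^ 3)⁻¹) * ε ^ 2) : ℝ) : ℂ)‖ ≤
    (216 * ((|B₁| + K + ‖B₂‖) ^ 2 * Real.exp (Q * (|B₁| + K) + ‖B₂‖) + K) / Q) * r ^ 3 *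
      Real.exp (-(Q * (r ^ 3)⁻¹ / 2) * ε ^ 2) := by
  set x : ℝ := ε ^ 2 * Q * (r ^ 3)⁻¹ with hx
  have hx0 : 0 ≤ x := by positivity
  have e1 : -(Q * (r ^ 3)⁻¹) * ε ^ 2 = -x := by rw [hx]; ring
  have e2 : -(Q * (r ^ 3)⁻¹ / 2) * ε ^ 2 = -x / 2 := by rw [hx]; ring
  have hεx : ε ^ 2 = x * r ^ 3 / Q := by rw [hx]; field_simp
  rw [e1, e2]
  have hε1 : |ε| ≤ 1 := hε.trans hr1
  have hxε : x * |ε| ≤ Q := by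
    have h3 : |ε| ^ 3 ≤ r ^ 3 := by gcongr
    have : x * |ε| = Q * (|ε| ^ 3 / r ^ 3) := by
      rw [hx, ← sq_abs]; field_simp
    rw [this]
    have : |ε| ^ 3 / r ^ 3 ≤ 1 := by rw [div_le_one (by positivity)]; exact h3
    nlinarith
  have hsq : ε ^ 2 ≤ |ε| := by rw [← sq_abs]; nlinarith [abs_nonneg ε]
  set u : ℂ := -(x : ℂ) * (B₁ * ε) + B₂ * ε with hu
  set v : ℂ := -(x : ℂ) * z with hv
  have hnu : ‖u‖ ≤ x * |B₁| * |ε| + ‖B₂‖ * |ε| := by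
    refine (norm_add_le _ _).trans (le_of_eq ?_)
    simp [abs_of_nonneg hx0, mul_assoc]
  have hnv : ‖v‖ ≤ x * (K * ε ^ 2) := by
    rw [hv, norm_mul, norm_neg, Complex.norm_real, Real.norm_eq_abs, abs_of_nonneg hx0]
    gcongr
  have hnv' : ‖v‖ ≤ x * (K * |ε|) := hnv.trans (by gcongr)
  have hw : ‖u + v‖ ≤ x * |ε| * (|B₁| + K) + ‖B₂‖ * |ε| := by
    refine (norm_add_le _ _).trans ?_
    nlinarith
  have hwM : ‖u + v‖ ≤ Q * (|B₁| + K) + ‖B₂‖ := by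
    refine hw.trans ?_
    have h1 : x * |ε| * (|B₁| + K) ≤ Q * (|B₁| + K) := by gcongr
    have h2 : ‖B₂‖ * |ε| ≤ ‖B₂‖ * 1 := by gcongr
    linarith
  have hwL : ‖u + v‖ ≤ |ε| * ((1 + x) * (|B₁| + K + ‖B₂‖)) := by
    refine hw.trans ?_
    have h1 : 0 ≤ |ε| * (|B₁| + K) := by positivity
    have h2 : 0 ≤ |ε| * x * ‖B₂‖ := by positivity
    nlinarith
  have hexp : Complex.exp (-(x : ℂ) * (1 + (B₁ : ℂ) * (ε : ℂ) + z) + B₂ * ε)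
      = ((Real.exp (-x) : ℝ) : ℂ) * Complex.exp (u + v) := by
    rw [Complex.ofReal_exp, ← Complex.exp_add]
    congr 1
    rw [hu, hv]; push_cast; ring
  rw [hexp]
  have : ((Real.exp (-x) : ℝ) : ℂ) * Complex.exp (u + v) - ((Real.exp (-x) : ℝ) : ℂ) * u
      - ((Real.exp (-x) : ℝ) : ℂ)
      = ((Real.exp (-x) : ℝ) : ℂ) * ((Complex.exp (u + v) - 1 - (u + v)) + v) := by ring
  rw [this, norm_mul, Complex.norm_real, Real.norm_eq_abs, abs_of_pos (Real.exp_pos _)]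
  set L := |B₁| + K + ‖B₂‖ with hL
  set M := Q * (|B₁| + K) + ‖B₂‖ with hM
  have hL0 : 0 ≤ L := by positivity
  have key : ‖(Complex.exp (u + v) - 1 - (u + v)) + v‖ ≤
      (1 + x) ^ 3 * ((L ^ 2 * Real.exp M + K) / Q * r ^ 3) := by
    calc _ ≤ ‖Complex.exp (u + v) - 1 - (u + v)‖ + ‖v‖ := norm_add_le _ _
      _ ≤ ‖u + v‖ ^ 2 * Real.exp ‖u + v‖ + ‖v‖ := by gcongr; exact aux_exp_two _
      _ ≤ (|ε| * ((1 + x) * L)) ^ 2 * Real.exp M + x * (K * ε ^ 2) := by gcongr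
      _ = (r ^ 3 / Q) * (x * (1 + x) ^ 2 * (L ^ 2 * Real.exp M) + x ^ 2 * K) := by
          rw [mul_pow, sq_abs, hεx]; ring
      _ ≤ (r ^ 3 / Q) * ((1 + x) ^ 3 * (L ^ 2 * Real.exp M) + (1 + x) ^ 3 * K) := by
          have h1 : x * (1 + x) ^ 2 ≤ (1 + x) ^ 3 := by nlinarith [sq_nonneg (1 + x)]
          have h2 : x ^ 2 ≤ (1 + x) ^ 3 := by nlinarith [pow_nonneg hx0 3, pow_nonneg hx0 2]
          gcongr
      _ = _ := by ring
  calc _ ≤ Real.exp (-x) * ((1 + x) ^ 3 * ((L ^ 2 * Real.exp M + K) / Q * r ^ 3)) := by gcongr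
    _ = (Real.exp (-x) * (1 + x) ^ 3) * ((L ^ 2 * Real.exp M + K) / Q * r ^ 3) := by ring
    _ ≤ (216 * Real.exp (-x / 2)) * ((L ^ 2 * Real.exp M + K) / Q * r ^ 3) := by
        gcongr ?_ * _
        exact aux_exp_cube x hx0
    _ = _ := by ring

lemma aux_outside (Q : ℝ) (hQ : 0 < Q) (r ε : ℝ) (hr : 0 < r) (hε : r < |ε|) :
    Real.exp (-(Q * (r ^ 3)⁻¹) * ε ^ 2) ≤ 48 / Q ^ 3 * r ^ 3 *
      Real.exp (-(Q * (r ^ 3)⁻¹ / 2) * ε ^ 2) := by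
  have hy : 0 < Q / (2 * r) := by positivity
  have h0 : (Q / (2 * r)) ^ 3 / 6 ≤ Real.exp (Q / (2 * r)) := by
    have := Real.pow_div_factorial_le_exp (Q / (2 * r)) hy.le 3
    simpa [Nat.factorial] using this
  have h1 : Real.exp (-(Q / (2 * r))) ≤ 48 / Q ^ 3 * r ^ 3 := by
    rw [Real.exp_neg]
    have := inv_anti₀ (by positivity) h0
    refine this.trans (le_of_eq ?_)
    field_simp; norm_num
  have h2 : -(Q * (r ^ 3)⁻¹ / 2) * ε ^ 2 ≤ -(Q / (2 * r)) := by
    have h3 : r ^ 2 ≤ ε ^ 2 := by rw [← sq_abs ε]; gcongr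
    have h4 : Q / (2 * r) = (Q * (r ^ 3)⁻¹ / 2) * r ^ 2 := by field_simp
    rw [h4, neg_mul, neg_le_neg_iff]
    gcongr
  calc Real.exp (-(Q * (r ^ 3)⁻¹) * ε ^ 2)
      = Real.exp (-(Q * (r ^ 3)⁻¹ / 2) * ε ^ 2) * Real.exp (-(Q * (r ^ 3)⁻¹ / 2) * ε ^ 2) := by
        rw [← Real.exp_add]; ring_nf
    _ ≤ _ := by
        gcongr
        exact (Real.exp_le_exp.mpr h2).trans h1

open MeasureTheory in
lemma aux_main (Q : ℝ) (hQ : 0 < Q) (B₁ : ℝ) (B₂ : ℂ) (h : ℝ → ℂ) (hmeas : Measurable h)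
    (K : ℝ) (hK : ∀ ε : ℝ, |ε| ≤ 1 → ‖h ε‖ ≤ K * ε ^ 2) :
    ∃ C : ℝ, 0 ≤ C ∧ ∀ r : ℝ, 0 < r → r ≤ 1 →
      ‖(∫ ε in (-r)..r,
            Complex.exp (-((ε ^ 2 * Q * (r ^ 3)⁻¹ : ℝ) : ℂ) *
                (1 + (B₁ : ℂ) * (ε : ℂ) + h ε) + B₂ * (ε : ℂ)))
        - ((Real.sqrt (Real.pi / (Q * (r ^ 3)⁻¹)) : ℝ) : ℂ)‖ ≤
        C * r ^ 3 * Real.sqrt (Real.pi / (Q * (r ^ 3)⁻¹ / 2)) := by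
  have hK0 : 0 ≤ K := by
    have := (norm_nonneg _).trans (hK 1 (by simp))
    simpa using this
  set C1 := 216 * ((|B₁| + K + ‖B₂‖) ^ 2 * Real.exp (Q * (|B₁| + K) + ‖B₂‖) + K) / Q with hC1
  have hC10 : 0 ≤ C1 := by positivity
  refine ⟨C1 + 48 / Q ^ 3, by positivity, fun r hr hr1 => ?_⟩
  set N := Q * (r ^ 3)⁻¹ with hN
  have hN0 : 0 < N := by positivity
  set f : ℝ → ℂ := fun ε => Complex.exp (-((ε ^ 2 * Q * (r ^ 3)⁻¹ : ℝ) : ℂ) *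
                (1 + (B₁ : ℂ) * (ε : ℂ) + h ε) + B₂ * (ε : ℂ)) with hf
  set g : ℝ → ℂ := fun ε => ((Real.exp (-N * ε ^ 2) : ℝ) : ℂ) with hg
  set o : ℝ → ℂ := fun ε => ((Real.exp (-N * ε ^ 2) : ℝ) : ℂ) *
        (-((ε ^ 2 * Q * (r ^ 3)⁻¹ : ℝ) : ℂ) * (B₁ * ε) + B₂ * ε) with ho
  set S := Set.Ioc (-r) r with hS
  have hSm : MeasurableSet S := measurableSet_Ioc
  have hin : ∀ ε ∈ S, ‖f ε - o ε - g ε‖ ≤ C1 * r ^ 3 * Real.exp (-(N / 2) * ε ^ 2) := by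
    intro ε hε
    have hε' : |ε| ≤ r := abs_le.mpr ⟨hε.1.le, hε.2⟩
    exact aux_inside Q hQ B₁ B₂ K hK0 r ε hr hr1 hε' (h ε) (hK ε (hε'.trans hr1))
  have hgi : Integrable g := (integrable_exp_neg_mul_sq hN0).ofReal
  have hg2 : Integrable (fun ε : ℝ => Real.exp (-(N / 2) * ε ^ 2)) :=
    integrable_exp_neg_mul_sq (by positivity)
  have hoc : Continuous o := by fun_prop
  have hoi : IntegrableOn o S := (hoc.intervalIntegrable (-r) r).1
  have hfm : Measurable f := by fun_prop
  have hdi : IntegrableOn (fun ε => f ε - o ε - g ε) S := by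
    refine Integrable.mono' ((hg2.const_mul (C1 * r ^ 3)).integrableOn (s := S)) ?_ ?_
    · exact ((hfm.sub hoc.measurable).sub (by fun_prop)).aestronglyMeasurable
    · exact (ae_restrict_iff' hSm).mpr (ae_of_all _ hin)
  have hfi : IntegrableOn f S := by
    have := (hdi.add (hgi.integrableOn (s := S))).add hoi
    refine this.congr_fun (fun ε _ => ?_) hSm
    simp
  have hodd : ∫ ε in S, o ε = 0 := by
    rw [hS, ← intervalIntegral.integral_of_le (by linarith)]
    have h1 : ∫ ε in (-r)..r, o (-ε) = ∫ ε in (-r)..r, o ε := by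
      rw [intervalIntegral.integral_comp_neg]; simp
    have h2 : ∀ ε, o (-ε) = - o ε := by
      intro ε; simp only [ho]; push_cast; simp only [neg_sq]; ring
    simp only [h2, intervalIntegral.integral_neg] at h1
    exact self_eq_neg.mp h1.symm
  have hgint : ∫ ε, g ε = ((Real.sqrt (Real.pi / N) : ℝ) : ℂ) := by
    rw [← integral_gaussian N]
    exact integral_ofReal
  rw [intervalIntegral.integral_of_le (by linarith), ← hgint]
  have heq : (∫ ε in S, f ε) - ∫ ε, g ε =
      ∫ ε, (S.indicator f ε - S.indicator o ε - g ε) := by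
    rw [integral_sub, integral_sub, integral_indicator hSm, integral_indicator hSm, hodd, sub_zero]
    · exact hfi.integrable_indicator hSm
    · exact hoi.integrable_indicator hSm
    · exact (hfi.integrable_indicator hSm).sub (hoi.integrable_indicator hSm)
    · exact hgi
  rw [heq, ← integral_gaussian, ← integral_const_mul]
  refine norm_integral_le_of_norm_le (hg2.const_mul _) ?_
  -- r = -ε boundary excluded a.e.
  have hne : ∀ᵐ ε : ℝ, ε ≠ -r := by
    simp [ae_iff]
  filter_upwards [hne] with ε hne
  by_cases hε : ε ∈ S
  · simp only [Set.indicator_of_mem hε]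
    refine (hin ε hε).trans ?_
    gcongr
    have : 0 ≤ 48 / Q ^ 3 := by positivity
    linarith
  · simp only [Set.indicator_of_notMem hε, sub_zero, zero_sub, norm_neg]
    have hε' : r < |ε| := by
      by_contra hcon
      push Not at hcon
      obtain ⟨a1, a2⟩ := abs_le.mp hcon
      exact hε ⟨lt_of_le_of_ne a1 (Ne.symm hne), a2⟩
    have := aux_outside Q hQ r ε hr hε'
    simp only [hg, Complex.norm_real, Real.norm_eq_abs, abs_of_pos (Real.exp_pos _)]
    refine this.trans ?_
    gcongr
    linarith

/-- The truncated Gaussian integral: if `h` is measurable with `|h(ε)| ≤ K ε²` for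
`|ε| ≤ 1`, then as `T → +∞`,
`∫_{−e^{−T/(3Λ')}}^{e^{−T/(3Λ')}} exp(−ε² Q e^{T/Λ'} (1 + B₁ε + h(ε)) + B₂ε) dε
  = √(π/Q) e^{−T/(2Λ')} (1 + O(e^{−T/Λ'}))`. -/
theorem truncated_gaussian_integral (Q Λ' : ℝ) (hQ : 0 < Q) (hΛ' : 0 < Λ')
    (B₁ : ℝ) (B₂ : ℂ) (h : ℝ → ℂ) (hmeas : Measurable h)
    (K : ℝ) (hK : ∀ ε : ℝ, |ε| ≤ 1 → ‖h ε‖ ≤ K * ε ^ 2) :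
    ∃ E : ℝ → ℂ, (E =O[atTop] fun T : ℝ => Real.exp (-T / Λ')) ∧
      ∀ T : ℝ,
        (∫ ε in (-Real.exp (-T / (3 * Λ')))..(Real.exp (-T / (3 * Λ'))),
            Complex.exp (-((ε ^ 2 * Q * Real.exp (T / Λ') : ℝ) : ℂ) *
                (1 + (B₁ : ℂ) * (ε : ℂ) + h ε) + B₂ * (ε : ℂ))) =
          ((Real.sqrt (Real.pi / Q) * Real.exp (-T / (2 * Λ')) : ℝ) : ℂ) * (1 + E T) := by
  obtain ⟨C, hC0, hC⟩ := aux_main Q hQ B₁ B₂ h hmeas K hK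
  set I : ℝ → ℂ := fun T => ∫ ε in (-Real.exp (-T / (3 * Λ')))..(Real.exp (-T / (3 * Λ'))),
            Complex.exp (-((ε ^ 2 * Q * Real.exp (T / Λ') : ℝ) : ℂ) *
                (1 + (B₁ : ℂ) * (ε : ℂ) + h ε) + B₂ * (ε : ℂ)) with hI
  set c : ℝ → ℝ := fun T => Real.sqrt (Real.pi / Q) * Real.exp (-T / (2 * Λ')) with hc
  have hc0 : ∀ T, 0 < c T := fun T => by
    have := Real.pi_pos
    positivity
  refine ⟨fun T => (I T - (c T : ℂ)) / (c T : ℂ), ?_, fun T => ?_⟩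
  · refine Asymptotics.IsBigO.of_bound (C * Real.sqrt 2) ?_
    filter_upwards [eventually_ge_atTop 0] with T hT
    have hr1 : Real.exp (-T / (3 * Λ')) ≤ 1 := by
      rw [Real.exp_le_one_iff]
      exact div_nonpos_of_nonpos_of_nonneg (by linarith) (by positivity)
    have hcube : Real.exp (-T / (3 * Λ')) ^ 3 = Real.exp (-T / Λ') := by
      rw [← Real.exp_nat_mul]; congr 1; push_cast; field_simp
    have hinv : (Real.exp (-T / Λ'))⁻¹ = Real.exp (T / Λ') := by
      rw [← Real.exp_neg]; congr 1; ring
    have hmain := hC _ (Real.exp_pos (-T / (3 * Λ'))) hr1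
    have hsq : Real.exp (-T / Λ') = Real.exp (-T / (2 * Λ')) ^ 2 := by
      rw [← Real.exp_nat_mul]; congr 1; push_cast; field_simp
    have hcT : Real.sqrt (Real.pi / (Q * (Real.exp (-T / Λ'))⁻¹)) = c T := by
      have : Real.pi / (Q * (Real.exp (-T / Λ'))⁻¹)
          = Real.pi / Q * Real.exp (-T / (2 * Λ')) ^ 2 := by
        rw [← hsq]; field_simp
      rw [this, Real.sqrt_mul (by positivity), Real.sqrt_sq (Real.exp_pos _).le]
    have hcT2 : Real.sqrt (Real.pi / (Q * (Real.exp (-T / Λ'))⁻¹ / 2)) = Real.sqrt 2 * c T := by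
      rw [← hcT, ← Real.sqrt_mul (by norm_num)]
      congr 1; field_simp
    rw [hcube, hcT, hcT2, hinv] at hmain
    rw [norm_div, Complex.norm_real, Real.norm_eq_abs, abs_of_pos (hc0 T), div_le_iff₀ (hc0 T),
      Real.norm_eq_abs, abs_of_pos (Real.exp_pos _)]
    refine hmain.trans (le_of_eq ?_)
    ring
  · have : (c T : ℂ) ≠ 0 := by exact_mod_cast (hc0 T).ne'
    change I T = (c T : ℂ) * _
    field_simp
    ring
end

section
/- Let a > 0, b ∈ ℝ, and for each integer n ≥ 1 let w_n be the unique positive solution of a·w_n·e^{w_n} = b·w_n + 2n. Then w_n ∼ log(2n/a) − log log(2n/a) as n → ∞; that is, lim_{n→∞} w_n / (log(2n/a) − log log(2n/a)) = 1. -/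
open Filter

/-- If `wₙ` is the unique positive solution of `a wₙ e^{wₙ} = b wₙ + 2n`, then
`wₙ ∼ log(2n/a) − log log(2n/a)` as `n → ∞`. -/
theorem saddle_asymptotics (a b : ℝ) (ha : 0 < a) (w : ℕ → ℝ)
    (hw : ∀ n : ℕ, 1 ≤ n → 0 < w n ∧
      a * w n * Real.exp (w n) = b * w n + 2 * (n : ℝ)) :
    Tendsto
      (fun n : ℕ =>
        w n / (Real.log (2 * (n : ℝ) / a) - Real.log (Real.log (2 * (n : ℝ) / a))))
      atTop (nhds 1) := by
  have hx : Tendsto (fun n : ℕ => 2 * (n : ℝ) / a) atTop atTop :=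
    (tendsto_natCast_atTop_atTop.const_mul_atTop (by norm_num : (0 : ℝ) < 2)).atTop_div_const ha
  have hL : Tendsto (fun n : ℕ => Real.log (2 * (n : ℝ) / a)) atTop atTop :=
    Real.tendsto_log_atTop.comp hx
  set L : ℕ → ℝ := fun n => Real.log (2 * (n : ℝ) / a) with hLdef
  have hlog : Tendsto (fun y : ℝ => Real.log y / y) atTop (nhds 0) := by
    simpa using Real.isLittleO_log_id_atTop.tendsto_div_nhds_zero
  have hexp : Tendsto (fun y : ℝ => y / Real.exp y) atTop (nhds 0) := by
    simpa [Real.exp_neg, div_eq_mul_inv] using Real.tendsto_pow_mul_exp_neg_atTop_nhds_zero 1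
  obtain ⟨c, hc⟩ : ∃ c, c = b / a := ⟨_, rfl⟩
  have hcexp : ∀ᶠ y : ℝ in atTop, |c| * y ≤ Real.exp y / 2 := by
    have h := hexp.const_mul |c|
    rw [mul_zero] at h
    filter_upwards [h.eventually (gt_mem_nhds (by norm_num : (0 : ℝ) < 1 / 2))] with y hy
    have := Real.exp_pos y
    rw [← mul_div_assoc, div_lt_iff₀ this] at hy
    linarith
  have key : ∀ᶠ n in atTop, L n - Real.log 2 - Real.log (L n) ≤ w n ∧ w n ≤ L n := by
    filter_upwards [eventually_ge_atTop 1, hL.eventually_ge_atTop 3,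
      hL.eventually hcexp] with n hn h3 hce
    obtain ⟨hw0, hwe⟩ := hw n hn
    have hn0 : (0 : ℝ) < n := by exact_mod_cast hn
    have hxe : Real.exp (L n) = 2 * n / a := Real.exp_log (by positivity)
    have heq : w n * (Real.exp (w n) - c) = Real.exp (L n) := by
      rw [hxe, hc]; field_simp; linarith
    have hE := Real.exp_pos (L n)
    have hcabs := le_abs_self c
    have hcabs' := neg_abs_le c
    have hc0 := abs_nonneg c
    have hup : w n ≤ L n := by
      by_contra! hlt
      have h1 : Real.exp (L n) < Real.exp (w n) := Real.exp_lt_exp.2 hlt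
      have h2 : c ≤ Real.exp (L n) / 2 := by nlinarith
      have h4 : Real.exp (L n) / 2 < Real.exp (w n) - c := by linarith
      nlinarith
    refine ⟨?_, hup⟩
    have h5 : Real.exp (L n) / 2 ≤ L n * Real.exp (w n) := by
      have h6 : w n * Real.exp (w n) ≤ L n * Real.exp (w n) := by gcongr
      have h7 : -(w n * c) ≤ |c| * L n := by nlinarith
      nlinarith
    have hLpos : 0 < L n := by linarith
    have h8 := Real.log_le_log (by positivity) h5
    rw [Real.log_div hE.ne' (by norm_num), Real.log_exp,
      Real.log_mul hLpos.ne' (Real.exp_pos _).ne', Real.log_exp] at h8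
    linarith
  have hlogL : Tendsto (fun n => Real.log (L n) / L n) atTop (nhds 0) := hlog.comp hL
  have hcL : Tendsto (fun n => Real.log 2 / L n) atTop (nhds 0) := hL.const_div_atTop _
  have hnum : Tendsto (fun n => w n / L n) atTop (nhds 1) := by
    have hlo : Tendsto (fun n => 1 - Real.log 2 / L n - Real.log (L n) / L n) atTop (nhds 1) := by
      simpa using (tendsto_const_nhds (x := (1 : ℝ))).sub hcL |>.sub hlogL
    refine tendsto_of_tendsto_of_tendsto_of_le_of_le' hlo tendsto_const_nhds ?_ ?_
    · filter_upwards [key, hL.eventually_gt_atTop 0] with n hk h0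
      rw [le_div_iff₀ h0]
      have : (1 - Real.log 2 / L n - Real.log (L n) / L n) * L n
          = L n - Real.log 2 - Real.log (L n) := by field_simp
      linarith [hk.1]
    · filter_upwards [key, hL.eventually_gt_atTop 0] with n hk h0
      rw [div_le_one h0]; exact hk.2
  have hden : Tendsto (fun n => 1 - Real.log (L n) / L n) atTop (nhds 1) := by
    simpa using (tendsto_const_nhds (x := (1 : ℝ))).sub hlogL
  have hfin := hnum.div hden one_ne_zero
  rw [div_one] at hfin
  refine hfin.congr' ?_
  filter_upwards [hL.eventually_gt_atTop 0] with n h0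
  have : 1 - Real.log (L n) / L n = (L n - Real.log (L n)) / L n := by field_simp
  simp only [Pi.div_apply]
  rw [this, div_div_div_cancel_right₀ h0.ne']
end

section
/- Let a > 0, b ∈ ℝ, Λ > 0 and β > 0. For each integer n ≥ 1 let w_n be the unique positive solution of a·w_n·e^{w_n} = b·w_n + 2n, and set A_n = (−1)^n exp(a e^{w_n} − b w_n) √n / (2β Λ^{2n} w_n^{2n+1/2} √π). Then A_n → 0 as n → ∞. -/
open Filter

/-- With `wₙ` the unique positive solution of `a wₙ e^{wₙ} = b wₙ + 2n` and
`Aₙ = (−1)ⁿ exp(a e^{wₙ} − b wₙ) √n / (2β Λ^{2n} wₙ^{2n+1/2} √π)`, we have `Aₙ → 0`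
as `n → ∞`. -/
theorem An_tendsto_zero (a b Λ β : ℝ) (ha : 0 < a) (hΛ : 0 < Λ) (hβ : 0 < β)
    (w : ℕ → ℝ)
    (hw : ∀ n : ℕ, 1 ≤ n → 0 < w n ∧
      a * w n * Real.exp (w n) = b * w n + 2 * (n : ℝ))
    (A : ℕ → ℝ)
    (hA : ∀ n : ℕ, A n = (-1) ^ n * Real.exp (a * Real.exp (w n) - b * w n) *
      Real.sqrt n /
      (2 * β * Λ ^ (2 * n) * w n ^ (2 * (n : ℝ) + 1 / 2) * Real.sqrt Real.pi)) :
    Tendsto A atTop (nhds 0) := by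
  have hb0 := abs_nonneg b
  have hb1 := neg_abs_le b
  have hb2 := le_abs_self b
  obtain ⟨M, hM1, hM2, hM3⟩ : ∃ M : ℝ, 1 ≤ M ∧ Real.exp (2 + |b|) ≤ Λ * M ∧ |b| + 1 ≤ a * M := by
    have h1 : 0 ≤ Real.exp (2 + |b|) / Λ := by positivity
    have h2 : 0 ≤ (|b| + 1) / a := by positivity
    refine ⟨1 + Real.exp (2 + |b|) / Λ + (|b| + 1) / a, by linarith, ?_, ?_⟩
    · have : Λ * (Real.exp (2 + |b|) / Λ) = Real.exp (2 + |b|) := by field_simp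
      nlinarith [mul_nonneg hΛ.le h2]
    · have : a * ((|b| + 1) / a) = |b| + 1 := by field_simp
      nlinarith [mul_nonneg ha.le h1]
  have hlim : Tendsto (fun n : ℕ => (Real.exp |b| / (2 * β * Real.sqrt Real.pi)) *
      Real.exp (-(n : ℝ))) atTop (nhds 0) := by
    have := (Real.tendsto_exp_neg_atTop_nhds_zero.comp
      (tendsto_natCast_atTop_atTop (R := ℝ))).const_mul
        (Real.exp |b| / (2 * β * Real.sqrt Real.pi))
    simpa using this
  refine squeeze_zero_norm' ?_ hlim
  filter_upwards [eventually_ge_atTop 1,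
    (tendsto_natCast_atTop_atTop (R := ℝ)).eventually_gt_atTop
      (a * M * Real.exp M + |b| * M)] with n hn hnM
  obtain ⟨hw0, hwe⟩ := hw n hn
  have hn0 : (0 : ℝ) ≤ n := Nat.cast_nonneg n
  have hpi : 0 < Real.sqrt Real.pi := Real.sqrt_pos.2 Real.pi_pos
  have hwM : M ≤ w n := by
    by_contra! h
    have h1 : a * w n * Real.exp (w n) ≤ a * M * Real.exp M := by gcongr
    have h2 : |b| * w n ≤ |b| * M := by gcongr
    nlinarith
  have hw1 : 1 ≤ w n := hM1.trans hwM
  have hexp : |b| + 1 ≤ a * Real.exp (w n) := by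
    have h1 : w n ≤ Real.exp (w n) := by linarith [Real.add_one_le_exp (w n)]
    have h2 : a * M ≤ a * Real.exp (w n) := by gcongr; linarith
    linarith
  have hw2n : w n ≤ 2 * n := by nlinarith
  have hE : a * Real.exp (w n) - b * w n ≤ |b| + 2 * n + 2 * |b| * n := by
    have h1 : a * Real.exp (w n) ≤ |b| + 2 * n := by
      have : a * Real.exp (w n) = b + 2 * n / w n := by
        field_simp
        linarith
      have h3 : 2 * (n : ℝ) / w n ≤ 2 * n := div_le_self (by positivity) hw1
      linarith
    have h2 : -b * w n ≤ |b| * (2 * n) := by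
      calc -b * w n ≤ |b| * w n := by gcongr; linarith
        _ ≤ _ := by gcongr
    linarith
  have hpow : w n ^ (2 * n) ≤ w n ^ (2 * (n : ℝ) + 1 / 2) := by
    rw [← Real.rpow_natCast]
    apply Real.rpow_le_rpow_of_exponent_le hw1
    push_cast
    linarith
  have hden : Real.exp ((2 + |b|) * (2 * n)) ≤ Λ ^ (2 * n) * w n ^ (2 * (n : ℝ) + 1 / 2) := by
    calc Real.exp ((2 + |b|) * (2 * n)) = Real.exp (2 + |b|) ^ (2 * n) := by
          rw [← Real.exp_nat_mul]; push_cast; ring_nf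
      _ ≤ (Λ * w n) ^ (2 * n) := by
          gcongr
          exact hM2.trans (by gcongr)
      _ = Λ ^ (2 * n) * w n ^ (2 * n) := mul_pow _ _ _
      _ ≤ _ := by gcongr
  have hsq : Real.sqrt n ≤ Real.exp n := by
    rw [Real.sqrt_le_left (Real.exp_pos _).le]
    nlinarith [Real.add_one_le_exp (n : ℝ)]
  have hwp : 0 < w n ^ (2 * (n : ℝ) + 1 / 2) := Real.rpow_pos_of_pos hw0 _
  rw [hA n, norm_div, norm_mul, norm_mul, norm_pow, norm_neg, norm_one, one_pow, one_mul,
    Real.norm_of_nonneg (Real.exp_pos _).le, Real.norm_of_nonneg (Real.sqrt_nonneg _),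
    Real.norm_of_nonneg (by positivity)]
  calc _ ≤ Real.exp (|b| + 2 * n + 2 * |b| * n) * Real.exp n /
        (2 * β * Real.sqrt Real.pi * Real.exp ((2 + |b|) * (2 * n))) := by
        apply div_le_div₀ (by positivity) (by gcongr) (by positivity)
        calc _ ≤ 2 * β * Real.sqrt Real.pi *
              (Λ ^ (2 * n) * w n ^ (2 * (n : ℝ) + 1 / 2)) := by gcongr
          _ = _ := by ring
    _ = _ := by
        rw [div_mul_eq_mul_div, ← Real.exp_add, ← Real.exp_add,
          div_eq_div_iff (by positivity) (by positivity)]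
        have : Real.exp (|b| + 2 * n + 2 * |b| * n + n) =
            Real.exp (|b| + -(n : ℝ)) * Real.exp ((2 + |b|) * (2 * n)) := by
          rw [← Real.exp_add]; ring_nf
        rw [this]; ring
end

section
/- Let δ ≥ 0, c > 0, Λ > 0, β ∈ ℝ, and let (a_n)_{n≥1} be complex numbers with |a_n| ≤ K n^{δ} for all n and some constant K. Then as x → +∞, ∑_{n=2}^∞ |a_n| n^{−1/2} exp(−c n^{1/Λ} e^{x/Λ} + βx) = O(exp(−c·2^{1/Λ} e^{x/Λ} + βx)); in particular, the tail over n ≥ 2 is exponentially smaller than e^{−x/Λ}·exp(−c e^{x/Λ} + βx), the size of the error term coming from the n = 1 term. -/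
open Filter

lemma summable_aux (δ c Λ : ℝ) (hc : 0 < c) (hΛ : 0 < Λ) :
    Summable (fun n : ℕ => ((n : ℝ) + 2) ^ δ * Real.exp (-c * ((n : ℝ) + 2) ^ (1 / Λ))) := by
  have hp : 0 < 1 / Λ := by positivity
  have ht : Tendsto (fun n : ℕ => ((n : ℝ) + 2)) atTop atTop :=
    tendsto_atTop_add_const_right _ _ tendsto_natCast_atTop_atTop
  have h1 := (isLittleO_exp_neg_mul_rpow_atTop hc (-(δ + 2) * Λ)).isBigO.comp_tendsto
    ((tendsto_rpow_atTop hp).comp ht)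
  have h2 := (Asymptotics.isBigO_refl (fun n : ℕ => ((n : ℝ) + 2) ^ δ) atTop).mul h1
  have hs : Summable (fun n : ℕ => ((n : ℝ) + 2) ^ (-2 : ℝ)) := by
    have h := (summable_nat_add_iff 2).mpr (Real.summable_nat_rpow.mpr (by norm_num : (-2 : ℝ) < -1))
    simpa using h
  refine summable_of_isBigO_nat hs ?_
  refine h2.congr (fun n => rfl) (fun n => ?_)
  have hm : (0 : ℝ) < (n : ℝ) + 2 := by positivity
  simp only [Function.comp]
  rw [← Real.rpow_mul hm.le, ← Real.rpow_add hm]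
  congr 1
  field_simp
  ring

/-- If `|aₙ| ≤ K n^δ`, then as `x → +∞` the tail over `n ≥ 2` satisfies
`∑_{n=2}^∞ |aₙ| n^{−1/2} exp(−c n^{1/Λ} e^{x/Λ} + βx)
  = O(exp(−c 2^{1/Λ} e^{x/Λ} + βx))`. -/
theorem dirichlet_tail_bound (δ c Λ β : ℝ) (hδ : 0 ≤ δ) (hc : 0 < c) (hΛ : 0 < Λ)
    (a : ℕ → ℂ) (K : ℝ) (ha : ∀ n : ℕ, 1 ≤ n → ‖a n‖ ≤ K * (n : ℝ) ^ δ) :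
    (fun x : ℝ =>
        ∑' n : ℕ, ‖a (n + 2)‖ * ((n : ℝ) + 2) ^ (-(1 / 2) : ℝ) *
          Real.exp (-c * ((n : ℝ) + 2) ^ (1 / Λ) * Real.exp (x / Λ) + β * x))
      =O[atTop] fun x : ℝ =>
        Real.exp (-c * (2 : ℝ) ^ (1 / Λ) * Real.exp (x / Λ) + β * x) := by
  have hp : 0 < 1 / Λ := by positivity
  have hS := ((summable_aux δ c Λ hc hΛ).mul_left K).mul_right (Real.exp (c * (2 : ℝ) ^ (1 / Λ)))
  set g : ℕ → ℝ := fun n => K * (((n : ℝ) + 2) ^ δ *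
    Real.exp (-c * ((n : ℝ) + 2) ^ (1 / Λ))) * Real.exp (c * (2 : ℝ) ^ (1 / Λ)) with hg
  refine Asymptotics.IsBigO.of_bound (∑' n, g n) ?_
  filter_upwards [eventually_ge_atTop 0] with x hx
  have hE : 1 ≤ Real.exp (x / Λ) := Real.one_le_exp (by positivity)
  rw [Real.norm_of_nonneg (tsum_nonneg fun n => by positivity), Real.norm_of_nonneg (by positivity),
    ← tsum_mul_right]
  have key : ∀ n : ℕ, ‖a (n + 2)‖ * ((n : ℝ) + 2) ^ (-(1 / 2) : ℝ) *
          Real.exp (-c * ((n : ℝ) + 2) ^ (1 / Λ) * Real.exp (x / Λ) + β * x) ≤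
      g n * Real.exp (-c * (2 : ℝ) ^ (1 / Λ) * Real.exp (x / Λ) + β * x) := by
    intro n
    have hn : (2 : ℝ) ≤ (n : ℝ) + 2 := by linarith [Nat.cast_nonneg (α := ℝ) n]
    have h1 : ‖a (n + 2)‖ ≤ K * ((n : ℝ) + 2) ^ δ := by
      simpa using ha (n + 2) (by omega)
    have h2 : ((n : ℝ) + 2) ^ (-(1 / 2) : ℝ) ≤ 1 :=
      Real.rpow_le_one_of_one_le_of_nonpos (by linarith) (by norm_num)
    have h3 : (2 : ℝ) ^ (1 / Λ) ≤ ((n : ℝ) + 2) ^ (1 / Λ) :=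
      Real.rpow_le_rpow (by norm_num) hn hp.le
    have h4 : ‖a (n + 2)‖ * ((n : ℝ) + 2) ^ (-(1 / 2) : ℝ) ≤ K * ((n : ℝ) + 2) ^ δ :=
      (mul_le_of_le_one_right (norm_nonneg _) h2).trans h1
    have h5 : g n * Real.exp (-c * (2 : ℝ) ^ (1 / Λ) * Real.exp (x / Λ) + β * x) =
        K * ((n : ℝ) + 2) ^ δ * Real.exp (-c * ((n : ℝ) + 2) ^ (1 / Λ) + c * (2 : ℝ) ^ (1 / Λ) +
          (-c * (2 : ℝ) ^ (1 / Λ) * Real.exp (x / Λ) + β * x)) := by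
      rw [Real.exp_add (_ + _), Real.exp_add (-c * ((n : ℝ) + 2) ^ (1 / Λ))]
      simp only [hg]
      ring
    rw [h5]
    refine mul_le_mul h4 (Real.exp_le_exp.mpr ?_) (Real.exp_pos _).le ((norm_nonneg _).trans h1)
    nlinarith [mul_nonneg (mul_nonneg hc.le (sub_nonneg.mpr h3)) (sub_nonneg.mpr hE)]
  have hs2 := hS.mul_right (Real.exp (-c * (2 : ℝ) ^ (1 / Λ) * Real.exp (x / Λ) + β * x))
  exact (Summable.of_nonneg_of_le (fun n => by positivity) key hs2).tsum_le_tsum key hs2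
end

section
/- Let F be an element of the (extended) Selberg class with data (m, k, ε, Q, λ_j, μ_j), with Dirichlet coefficients (a_n), and let Ξ_F(z) = ξ_F(1/2 + iz). Then Ξ_F is integrable on ℝ and for every real x, ∫_{-∞}^{∞} Ξ_F(z) e^{-ixz} dz = ε Q^{1/2} ∑_{n=1}^∞ (a_n / n^{1/2}) ∫_{-∞}^{∞} (1/4 + z²)^m (∏_{j=1}^k Γ(iλ_j z + μ_j + λ_j/2)) · (n e^{x} / Q)^{−iz} dz, where the sum over n converges absolutely. -/
open Filter Finset MeasureTheory

/-- An element of the (extended) Selberg class, with data `(m, k, ε, Q, λⱼ, μⱼ)`,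
Dirichlet coefficients `a`, the `L`-function `F` and the completed function `xi`.
`F(s) = ∑ aₙ n^{−s}` converges (absolutely, as we are in `ℂ`) for `Re s > 1` with `a₁ = 1`
and `aₙ = O(n^δ)`; `(s−1)^m F(s)` extends to an entire function of order 1;
`|ε| = 1`, `Q > 0`, `λⱼ > 0`, `Re μⱼ ≥ 0`; the completed function
`ξ(s) = s^m (1−s)^m ε Q^s (∏ Γ(λⱼ s + μⱼ)) F(s)` is entire and satisfies the
functional equation `ξ(s) = conj(ξ(1 − conj s))`. -/
structure SelbergClass where
  m : ℕ
  k : ℕ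
  eps : ℂ
  Q : ℝ
  lam : Fin k → ℝ
  mu : Fin k → ℂ
  a : ℕ → ℂ
  F : ℂ → ℂ
  xi : ℂ → ℂ
  hk : 1 ≤ k
  heps : ‖eps‖ = 1
  hQ : 0 < Q
  hlam : ∀ j, 0 < lam j
  hmu : ∀ j, 0 ≤ (mu j).re
  ha_one : a 1 = 1
  ha_growth : ∃ δ : ℝ, 0 < δ ∧ ∃ K : ℝ, ∀ n : ℕ, 1 ≤ n → ‖a n‖ ≤ K * (n : ℝ) ^ δ
  hFseries : ∀ s : ℂ, 1 < s.re →
    HasSum (fun n : ℕ => a (n + 1) * ((n : ℂ) + 1) ^ (-s)) (F s)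
  hmero : ∃ G : ℂ → ℂ, Differentiable ℂ G ∧
    (∀ s : ℂ, s ≠ 1 → G s = (s - 1) ^ m * F s) ∧
    ∀ η : ℝ, 0 < η → ∃ C : ℝ, ∀ s : ℂ, ‖G s‖ ≤ C * Real.exp (‖s‖ ^ (1 + η))
  hxi_entire : Differentiable ℂ xi
  hxi_eq : ∀ s : ℂ, 1 < s.re → xi s =
    s ^ m * (1 - s) ^ m * eps * (Q : ℂ) ^ s *
      (∏ j, Complex.Gamma ((lam j : ℂ) * s + mu j)) * F s
  hfe : ∀ s : ℂ, xi s = starRingEnd ℂ (xi (1 - starRingEnd ℂ s))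

lemma aux_norm_Gamma_le {s : ℂ} (hs : 0 < s.re) : ‖Complex.Gamma s‖ ≤ Real.Gamma s.re := by
  rw [Complex.Gamma_eq_integral hs, Real.Gamma_eq_integral hs, Complex.GammaIntegral]
  refine (norm_integral_le_integral_norm _).trans (le_of_eq ?_)
  refine setIntegral_congr_fun measurableSet_Ioi ?_
  intro x hx
  have hx' : 0 < x := hx
  simp only [norm_mul]
  rw [Complex.norm_cpow_eq_rpow_re_of_pos hx']
  simp [Complex.norm_exp]

lemma aux_Gamma_decay (N : ℕ) : ∀ σ₀ σ₁ : ℝ, 0 < σ₀ → ∃ C : ℝ, 0 ≤ C ∧ ∀ s : ℂ,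
    σ₀ ≤ s.re → s.re ≤ σ₁ → ‖Complex.Gamma s‖ * ‖s‖ ^ N ≤ C := by
  induction N with
  | zero =>
    intro σ₀ σ₁ h0
    have hc : ContinuousOn Real.Gamma (Set.Icc σ₀ σ₁) := by
      intro x hx
      refine (Real.differentiableAt_Gamma ?_).continuousAt.continuousWithinAt
      intro m h
      have : (0:ℝ) ≤ m := Nat.cast_nonneg m
      have := hx.1
      linarith
    obtain ⟨C, hC⟩ := isCompact_Icc.exists_bound_of_continuousOn hc
    refine ⟨max C 0, le_max_right _ _, fun s h1 h2 => ?_⟩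
    rw [pow_zero, mul_one]
    refine (aux_norm_Gamma_le (by linarith)).trans ?_
    refine (le_abs_self _).trans ((hC s.re ⟨h1, h2⟩).trans (le_max_left _ _))
  | succ N ih =>
    intro σ₀ σ₁ h0
    obtain ⟨C, hC0, hC⟩ := ih (σ₀ + 1) (σ₁ + 1) (by linarith)
    refine ⟨C, hC0, fun s h1 h2 => ?_⟩
    have hs : s ≠ 0 := by
      rintro rfl
      simp at h1; linarith
    have h := hC (s + 1) (by simp; linarith) (by simp; linarith)
    rw [Complex.Gamma_add_one s hs, norm_mul] at h
    have hle : ‖s‖ ≤ ‖s + 1‖ := by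
      rw [Complex.norm_def, Complex.norm_def]
      apply Real.sqrt_le_sqrt
      simp only [Complex.normSq_apply, Complex.add_re, Complex.add_im, Complex.one_re,
        Complex.one_im]
      nlinarith
    calc ‖Complex.Gamma s‖ * ‖s‖ ^ (N + 1) = ‖s‖ * ‖Complex.Gamma s‖ * ‖s‖ ^ N := by ring
      _ ≤ ‖s‖ * ‖Complex.Gamma s‖ * ‖s + 1‖ ^ N := by gcongr
      _ ≤ C := h

lemma aux_Gamma_affine_decay (N : ℕ) (l : ℝ) (hl : 0 < l) (μ : ℂ) (hμ : 0 ≤ μ.re) :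
    ∃ C : ℝ, 0 ≤ C ∧ ∀ s : ℂ, 1 / 2 ≤ s.re → s.re ≤ 2 →
      ‖Complex.Gamma ((l : ℂ) * s + μ)‖ * ‖s‖ ^ N ≤ C := by
  obtain ⟨C, hC0, hC⟩ := aux_Gamma_decay N (l / 2) (l * 2 + μ.re) (by positivity)
  refine ⟨C * ((1 + 2 * ‖μ‖ / l) / l) ^ N, by positivity, fun s h1 h2 => ?_⟩
  have hre : ((l : ℂ) * s + μ).re = l * s.re + μ.re := by simp
  have h := hC ((l : ℂ) * s + μ) (by rw [hre]; nlinarith) (by rw [hre]; nlinarith)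
  have hlow : l / 2 ≤ ‖(l : ℂ) * s + μ‖ := by
    refine le_trans ?_ (Complex.re_le_norm _)
    rw [hre]; nlinarith
  have hls : l * ‖s‖ ≤ ‖(l : ℂ) * s + μ‖ + ‖μ‖ := by
    have := norm_sub_le ((l : ℂ) * s + μ) μ
    simpa [abs_of_pos hl] using this
  have hμ' : ‖μ‖ ≤ 2 * ‖μ‖ / l * ‖(l : ℂ) * s + μ‖ := by
    calc ‖μ‖ = 2 * ‖μ‖ / l * (l / 2) := by field_simp
      _ ≤ _ := by gcongr
  have hs : ‖s‖ ≤ (1 + 2 * ‖μ‖ / l) / l * ‖(l : ℂ) * s + μ‖ := by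
    rw [div_mul_eq_mul_div, le_div_iff₀ hl]
    nlinarith
  calc ‖Complex.Gamma ((l : ℂ) * s + μ)‖ * ‖s‖ ^ N
      ≤ ‖Complex.Gamma ((l : ℂ) * s + μ)‖ *
        ((1 + 2 * ‖μ‖ / l) / l * ‖(l : ℂ) * s + μ‖) ^ N := by gcongr
    _ = ‖Complex.Gamma ((l : ℂ) * s + μ)‖ * ‖(l : ℂ) * s + μ‖ ^ N *
        ((1 + 2 * ‖μ‖ / l) / l) ^ N := by rw [mul_pow]; ring
    _ ≤ _ := by gcongr

lemma aux_prod_decay (S : SelbergClass) (N : ℕ) :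
    ∃ C : ℝ, 0 ≤ C ∧ ∀ s : ℂ, 1 / 2 ≤ s.re → s.re ≤ 2 →
      ‖∏ j, Complex.Gamma ((S.lam j : ℂ) * s + S.mu j)‖ * ‖s‖ ^ N ≤ C := by
  have h0 := fun j => aux_Gamma_affine_decay 0 (S.lam j) (S.hlam j) (S.mu j) (S.hmu j)
  choose C hC0 hC using h0
  let j₀ : Fin S.k := ⟨0, S.hk⟩
  obtain ⟨D, hD0, hD⟩ := aux_Gamma_affine_decay N (S.lam j₀) (S.hlam j₀) (S.mu j₀) (S.hmu j₀)
  refine ⟨D * ∏ j ∈ univ.erase j₀, C j,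
    mul_nonneg hD0 (Finset.prod_nonneg fun j _ => hC0 j), fun s h1 h2 => ?_⟩
  rw [norm_prod, ← Finset.mul_prod_erase univ _ (Finset.mem_univ j₀), mul_right_comm]
  refine mul_le_mul (hD s h1 h2) ?_ (Finset.prod_nonneg fun j _ => norm_nonneg _) hD0
  refine Finset.prod_le_prod (fun j _ => norm_nonneg _) fun j _ => ?_
  simpa using hC j s h1 h2

/-- the polynomial-Gamma factor -/
noncomputable def auxP (S : SelbergClass) (s : ℂ) : ℂ :=
  s ^ S.m * (1 - s) ^ S.m * ∏ j, Complex.Gamma ((S.lam j : ℂ) * s + S.mu j)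

lemma aux_one_sub_norm {s : ℂ} (h1 : 1 / 2 ≤ s.re) : ‖1 - s‖ ≤ 3 * ‖s‖ := by
  have h := norm_sub_le (1 : ℂ) s
  have h2 := Complex.re_le_norm s
  rw [norm_one] at h
  linarith

lemma auxP_decay (S : SelbergClass) (N : ℕ) :
    ∃ C : ℝ, 0 ≤ C ∧ ∀ s : ℂ, 1 / 2 ≤ s.re → s.re ≤ 2 → ‖auxP S s‖ * ‖s‖ ^ N ≤ C := by
  obtain ⟨C, hC0, hC⟩ := aux_prod_decay S (N + 2 * S.m)
  refine ⟨3 ^ S.m * C, by positivity, fun s h1 h2 => ?_⟩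
  have h := hC s h1 h2
  rw [auxP, norm_mul, norm_mul, norm_pow, norm_pow]
  set p := ‖∏ j, Complex.Gamma ((S.lam j : ℂ) * s + S.mu j)‖ with hp
  have hp0 : 0 ≤ p := norm_nonneg _
  calc ‖s‖ ^ S.m * ‖1 - s‖ ^ S.m * p * ‖s‖ ^ N
      ≤ ‖s‖ ^ S.m * (3 * ‖s‖) ^ S.m * p * ‖s‖ ^ N := by
        gcongr; exact aux_one_sub_norm h1
    _ = 3 ^ S.m * (p * ‖s‖ ^ (N + 2 * S.m)) := by
        rw [mul_pow, pow_add, two_mul, pow_add]; ring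
    _ ≤ _ := by gcongr

lemma aux_prod_diff (S : SelbergClass) {s : ℂ} (hs : 0 < s.re) :
    DifferentiableAt ℂ (fun s => ∏ j, Complex.Gamma ((S.lam j : ℂ) * s + S.mu j)) s := by
  refine DifferentiableAt.fun_finsetProd fun j _ => ?_
  have h : DifferentiableAt ℂ Complex.Gamma ((S.lam j : ℂ) * s + S.mu j) := by
    refine Complex.differentiableAt_Gamma _ fun m h => ?_
    have h := congrArg Complex.re h
    simp at h
    have h1 := mul_pos (S.hlam j) hs
    have h2 := S.hmu j
    have : (0:ℝ) ≤ m := Nat.cast_nonneg m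
    linarith
  exact h.comp s (by fun_prop)

lemma auxP_diff (S : SelbergClass) {s : ℂ} (hs : 0 < s.re) :
    DifferentiableAt ℂ (auxP S) s := by
  unfold auxP
  have := aux_prod_diff S hs
  fun_prop

/-- a decay-at-rate `1/(1+t²)` statement on the strip -/
def auxDecay (f : ℂ → ℂ) : Prop :=
  ∃ C : ℝ, 0 ≤ C ∧ ∀ s : ℂ, 1 / 2 ≤ s.re → s.re ≤ 2 → ‖f s‖ ≤ C * (1 + s.im ^ 2)⁻¹

lemma aux_line_re (c z : ℝ) : ((c : ℂ) + Complex.I * z).re = c := by simp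
lemma aux_line_im (c z : ℝ) : ((c : ℂ) + Complex.I * z).im = z := by simp

lemma aux_integrable {f : ℂ → ℂ} (hd : ∀ s : ℂ, 0 < s.re → DifferentiableAt ℂ f s)
    (hb : auxDecay f) {c : ℝ} (h1 : 1 / 2 ≤ c) (h2 : c ≤ 2) :
    Integrable (fun z : ℝ => f ((c : ℂ) + Complex.I * z)) := by
  obtain ⟨C, hC0, hC⟩ := hb
  refine (integrable_inv_one_add_sq.const_mul C).mono' ?_ ?_
  · refine Continuous.aestronglyMeasurable ?_
    rw [continuous_iff_continuousAt]
    intro z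
    have h := (hd ((c : ℂ) + Complex.I * z) (by rw [aux_line_re]; linarith)).continuousAt
    exact ContinuousAt.comp (f := fun z : ℝ => (c : ℂ) + Complex.I * z) h (by fun_prop)
  · refine ae_of_all _ fun z => ?_
    have h := hC ((c : ℂ) + Complex.I * z) (by rw [aux_line_re]; linarith)
      (by rw [aux_line_re]; linarith)
    rwa [aux_line_im] at h

lemma aux_horizontal {f : ℂ → ℂ} (hb : auxDecay f) (g : ℝ → ℝ)
    (hg : Tendsto (fun T => (1 + g T ^ 2)⁻¹) atTop (nhds 0)) :
    Tendsto (fun T : ℝ => ∫ x in (1 / 2 : ℝ)..2, f (x + (g T : ℂ) * Complex.I)) atTop (nhds 0) := by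
  obtain ⟨C, hC0, hC⟩ := hb
  rw [tendsto_zero_iff_norm_tendsto_zero]
  have h2 : Tendsto (fun T => C * (1 + g T ^ 2)⁻¹ * |(2:ℝ) - 1 / 2|) atTop (nhds 0) := by
    have := (hg.const_mul C).mul_const |(2:ℝ) - 1 / 2|
    simpa using this
  refine squeeze_zero (fun _ => norm_nonneg _) (fun T => ?_) h2
  refine intervalIntegral.norm_integral_le_of_norm_le_const fun x hx => ?_
  rw [Set.uIoc_of_le (by norm_num)] at hx
  have := hC (x + (g T : ℂ) * Complex.I) (by simpa using hx.1.le) (by simpa using hx.2)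
  simpa using this

lemma aux_shift {f : ℂ → ℂ} (hd : ∀ s : ℂ, 0 < s.re → DifferentiableAt ℂ f s)
    (hb : auxDecay f) :
    ∫ z : ℝ, f (1 / 2 + Complex.I * z) = ∫ z : ℝ, f (2 + Complex.I * z) := by
  have i1 := aux_integrable hd hb (c := 1 / 2) le_rfl (by norm_num)
  have i2 := aux_integrable hd hb (c := 2) (by norm_num) le_rfl
  push_cast at i1 i2
  have t1 := intervalIntegral_tendsto_integral i1 tendsto_neg_atTop_atBot tendsto_id
  have t2 := intervalIntegral_tendsto_integral i2 tendsto_neg_atTop_atBot tendsto_id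
  have hsq : Tendsto (fun T : ℝ => (1 + T ^ 2)⁻¹) atTop (nhds 0) := by
    refine tendsto_inv_atTop_zero.comp ?_
    exact tendsto_atTop_add_const_left _ _ (tendsto_pow_atTop two_ne_zero)
  have h1 := aux_horizontal hb (fun T => -T) (by simpa using hsq)
  have h2 := aux_horizontal hb (fun T => T) hsq
  have key : ∀ T : ℝ,
      (∫ z in (-T)..(id T), f (2 + Complex.I * z)) - (∫ z in (-T)..(id T), f (1 / 2 + Complex.I * z))
      = Complex.I * ((∫ x in (1 / 2 : ℝ)..2, f (x + ((-T : ℝ) : ℂ) * Complex.I)) -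
        ∫ x in (1 / 2 : ℝ)..2, f (x + (T : ℂ) * Complex.I)) := by
    intro T
    have h := Complex.integral_boundary_rect_eq_zero_of_differentiableOn f
      (⟨1 / 2, -T⟩ : ℂ) (⟨2, T⟩ : ℂ) (by
        intro s hs
        refine (hd s ?_).differentiableWithinAt
        have := hs.1
        simp only [Set.mem_preimage] at this
        rw [Set.uIcc_of_le (by norm_num)] at this
        linarith [this.1])
    simp only [smul_eq_mul] at h
    have e1 : (((1 / 2 : ℝ) : ℝ) : ℂ) = 1 / 2 := by push_cast; rfl
    have e2 : ((2 : ℝ) : ℂ) = 2 := by push_cast; rfl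
    rw [e1, e2] at h
    simp only [mul_comm _ Complex.I, id] at h ⊢
    set A := ∫ (y : ℝ) in -T..T, f (2 + Complex.I * ↑y)
    set B := ∫ (y : ℝ) in -T..T, f (1 / 2 + Complex.I * ↑y)
    linear_combination (-Complex.I) * h + (A - B) * Complex.I_mul_I
  have t3 := t2.sub t1
  have t4 := (h1.sub h2).const_mul Complex.I
  simp only [sub_zero, mul_zero] at t4
  have := tendsto_nhds_unique t3 (t4.congr fun T => (key T).symm)
  exact (sub_eq_zero.mp this).symm

lemma aux_Q_bound (S : SelbergClass) : ∃ C : ℝ, 0 ≤ C ∧ ∀ s : ℂ, 1 / 2 ≤ s.re → s.re ≤ 2 →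
    ‖(S.Q : ℂ) ^ s‖ ≤ C := by
  have hc : ContinuousOn (fun t : ℝ => S.Q ^ t) (Set.Icc (1 / 2) 2) := by
    refine Continuous.continuousOn ?_
    exact Real.continuous_const_rpow S.hQ.ne'
  obtain ⟨C, hC⟩ := isCompact_Icc.exists_bound_of_continuousOn hc
  refine ⟨max C 0, le_max_right _ _, fun s h1 h2 => ?_⟩
  rw [Complex.norm_cpow_eq_rpow_re_of_pos S.hQ]
  exact (le_abs_self _).trans ((hC s.re ⟨h1, h2⟩).trans (le_max_left _ _))

lemma aux_xi_half_plane (S : SelbergClass) (G : ℂ → ℂ) (hG : Differentiable ℂ G)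
    (hGF : ∀ s : ℂ, s ≠ 1 → G s = (s - 1) ^ S.m * S.F s) {s : ℂ} (hs : 0 < s.re) :
    S.xi s = (-1) ^ S.m * s ^ S.m * S.eps * (S.Q : ℂ) ^ s *
      (∏ j, Complex.Gamma ((S.lam j : ℂ) * s + S.mu j)) * G s := by
  have hopen : IsOpen {s : ℂ | 0 < s.re} := isOpen_lt continuous_const Complex.continuous_re
  have hpre : IsPreconnected {s : ℂ | 0 < s.re} :=
    (convex_halfSpace_re_gt 0).isPreconnected
  have hA : AnalyticOnNhd ℂ S.xi {s : ℂ | 0 < s.re} :=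
    S.hxi_entire.differentiableOn.analyticOnNhd hopen
  have hB : AnalyticOnNhd ℂ (fun s => (-1) ^ S.m * s ^ S.m * S.eps * (S.Q : ℂ) ^ s *
      (∏ j, Complex.Gamma ((S.lam j : ℂ) * s + S.mu j)) * G s) {s : ℂ | 0 < s.re} := by
    refine DifferentiableOn.analyticOnNhd (fun s hs => ?_) hopen
    have h1 := aux_prod_diff S hs
    have h2 : DifferentiableAt ℂ (fun s : ℂ => (S.Q : ℂ) ^ s) s :=
      (differentiableAt_id).const_cpow (Or.inl (by exact_mod_cast S.hQ.ne'))
    have h3 := hG s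
    refine DifferentiableAt.differentiableWithinAt ?_
    refine ((DifferentiableAt.mul ?_ h2).mul h1).mul h3
    fun_prop
  refine hA.eqOn_of_preconnected_of_eventuallyEq hB hpre (z₀ := 2) (by simp) ?_ hs
  have hn : {s : ℂ | 1 < s.re} ∈ nhds (2 : ℂ) :=
    (isOpen_lt continuous_const Complex.continuous_re).mem_nhds (by simp)
  filter_upwards [hn] with s hs
  have hs' : 1 < s.re := hs
  have hne : s ≠ 1 := by
    rintro rfl
    simp at hs'
  rw [S.hxi_eq s hs', hGF s hne]
  have : (1 - s) ^ S.m = (-1) ^ S.m * (s - 1) ^ S.m := by rw [← mul_pow]; ring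
  rw [this]; ring

lemma aux_xi_growth (S : SelbergClass) : ∃ C : ℝ, 0 ≤ C ∧ ∀ s : ℂ, 1 / 2 ≤ s.re → s.re ≤ 2 →
    ‖S.xi s‖ ≤ C * Real.exp (4 * Real.exp |s.im|) := by
  obtain ⟨G, hG, hGF, hgr⟩ := S.hmero
  obtain ⟨K, hK⟩ := hgr 1 one_pos
  obtain ⟨C, hC0, hC⟩ := aux_prod_decay S S.m
  obtain ⟨D, hD0, hD⟩ := aux_Q_bound S
  refine ⟨C * D * |K|, by positivity, fun s h1 h2 => ?_⟩
  rw [aux_xi_half_plane S G hG hGF (by linarith)]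
  have hp := hC s h1 h2
  have hq := hD s h1 h2
  have hg := hK s
  have hs : ‖s‖ ≤ 2 + |s.im| := by
    refine (Complex.norm_le_abs_re_add_abs_im s).trans ?_
    rw [abs_of_nonneg (by linarith : (0:ℝ) ≤ s.re)]
    linarith
  have he : ‖s‖ ^ (1 + 1 : ℝ) ≤ 4 * Real.exp |s.im| := by
    have e : (1 + 1 : ℝ) = ((2 : ℕ) : ℝ) := by norm_num
    rw [e, Real.rpow_natCast]
    have h3 : |s.im| / 2 + 1 ≤ Real.exp (|s.im| / 2) := Real.add_one_le_exp _
    have h4 : Real.exp |s.im| = Real.exp (|s.im| / 2) ^ 2 := by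
      rw [← Real.exp_nat_mul]; congr 1; push_cast; ring
    rw [h4]
    calc ‖s‖ ^ 2 ≤ (2 + |s.im|) ^ 2 := by gcongr
      _ = 4 * (|s.im| / 2 + 1) ^ 2 := by ring
      _ ≤ _ := by gcongr
  have hg' : ‖G s‖ ≤ |K| * Real.exp (4 * Real.exp |s.im|) := by
    refine hg.trans ?_
    gcongr
    exact le_abs_self K
  rw [norm_mul, norm_mul, norm_mul, norm_mul, norm_mul, S.heps, norm_pow, norm_pow, norm_neg,
    norm_one, one_pow, one_mul, mul_one]
  set p := ‖∏ j, Complex.Gamma ((S.lam j : ℂ) * s + S.mu j)‖ with hpd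
  have hp0 : 0 ≤ p := norm_nonneg _
  calc ‖s‖ ^ S.m * ‖(S.Q : ℂ) ^ s‖ * p * ‖G s‖
      = (p * ‖s‖ ^ S.m) * ‖(S.Q : ℂ) ^ s‖ * ‖G s‖ := by ring
    _ ≤ C * D * (|K| * Real.exp (4 * Real.exp |s.im|)) := by gcongr
    _ = _ := by ring

lemma aux_summable (S : SelbergClass) :
    Summable fun n : ℕ => ‖S.a (n + 1)‖ * Real.exp (-(2 * Real.log ((n : ℝ) + 1))) := by
  have h := (S.hFseries 2 (by norm_num)).summable.norm
  refine h.congr fun n => ?_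
  rw [norm_mul]
  congr 1
  have hn : (0 : ℝ) < (n : ℝ) + 1 := by positivity
  have e : ((n : ℂ) + 1) = (((n : ℝ) + 1 : ℝ) : ℂ) := by push_cast; rfl
  rw [e, Complex.norm_cpow_eq_rpow_re_of_pos hn, Real.rpow_def_of_pos hn]
  congr 1
  simp; ring

lemma aux_F_bound (S : SelbergClass) : ∃ A : ℝ, 0 ≤ A ∧ ∀ s : ℂ, s.re = 2 → ‖S.F s‖ ≤ A := by
  refine ⟨∑' n : ℕ, ‖S.a (n + 1)‖ * Real.exp (-(2 * Real.log ((n : ℝ) + 1))),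
    tsum_nonneg fun n => by positivity, fun s hs => ?_⟩
  rw [← (S.hFseries s (by rw [hs]; norm_num)).tsum_eq]
  refine tsum_of_norm_bounded (aux_summable S).hasSum fun n => le_of_eq ?_
  rw [norm_mul]
  congr 1
  have hn : (0 : ℝ) < (n : ℝ) + 1 := by positivity
  have e : ((n : ℂ) + 1) = (((n : ℝ) + 1 : ℝ) : ℂ) := by push_cast; rfl
  rw [e, Complex.norm_cpow_eq_rpow_re_of_pos hn, Real.rpow_def_of_pos hn]
  congr 1
  simp [hs]; ring

lemma aux_xi_eq (S : SelbergClass) {s : ℂ} (hs : 1 < s.re) :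
    S.xi s = S.eps * (S.Q : ℂ) ^ s * auxP S s * S.F s := by
  rw [S.hxi_eq s hs, auxP]; ring

lemma aux_xi_right (S : SelbergClass) : ∃ C : ℝ, 0 ≤ C ∧ ∀ s : ℂ, s.re = 2 →
    ‖S.xi s‖ * ‖s‖ ^ 2 ≤ C := by
  obtain ⟨A, hA0, hA⟩ := aux_F_bound S
  obtain ⟨D, hD0, hD⟩ := aux_Q_bound S
  obtain ⟨C, hC0, hC⟩ := auxP_decay S 2
  refine ⟨D * C * A, by positivity, fun s hs => ?_⟩
  rw [aux_xi_eq S (by rw [hs]; norm_num), norm_mul, norm_mul, norm_mul, S.heps, one_mul]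
  have h1 := hA s hs
  have h2 := hD s (by rw [hs]; norm_num) hs.le
  have h3 := hC s (by rw [hs]; norm_num) hs.le
  calc ‖(S.Q : ℂ) ^ s‖ * ‖auxP S s‖ * ‖S.F s‖ * ‖s‖ ^ 2
      = ‖(S.Q : ℂ) ^ s‖ * (‖auxP S s‖ * ‖s‖ ^ 2) * ‖S.F s‖ := by ring
    _ ≤ _ := by gcongr

lemma aux_xi_refl (S : SelbergClass) (s : ℂ) :
    ‖S.xi s‖ = ‖S.xi (1 - starRingEnd ℂ s)‖ := by
  conv_lhs => rw [S.hfe s]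
  exact RCLike.norm_conj _

lemma aux_xi_growth_strip (S : SelbergClass) : ∃ C : ℝ, 0 ≤ C ∧ ∀ s : ℂ, -1 ≤ s.re → s.re ≤ 2 →
    ‖S.xi s‖ ≤ C * Real.exp (4 * Real.exp |s.im|) := by
  obtain ⟨C, hC0, hC⟩ := aux_xi_growth S
  refine ⟨C, hC0, fun s h1 h2 => ?_⟩
  rcases le_total (1 / 2) s.re with h | h
  · exact hC s h h2
  · rw [aux_xi_refl]
    have := hC (1 - starRingEnd ℂ s) (by simp; linarith) (by simp; linarith)
    simpa using this

lemma aux_xi_decay (S : SelbergClass) : auxDecay S.xi := by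
  obtain ⟨C, hC0, hC⟩ := aux_xi_right S
  obtain ⟨K, hK0, hK⟩ := aux_xi_growth_strip S
  have hmain : ∀ s : ℂ, -1 ≤ s.re → s.re ≤ 2 → ‖S.xi s * (s + 2) ^ 2‖ ≤ 9 * C := by
    intro s h1 h2
    refine PhragmenLindelof.vertical_strip (a := -1) (b := 2)
      (f := fun s => S.xi s * (s + 2) ^ 2) ?_ ?_ ?_ ?_ h1 h2
    · refine Differentiable.diffContOnCl ?_
      have := S.hxi_entire
      fun_prop
    · refine ⟨1, ?_, 5, ?_⟩
      · rw [lt_div_iff₀ (by norm_num)]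
        linarith [Real.pi_gt_three]
      · refine Asymptotics.IsBigO.of_bound (16 * K) ?_
        refine Filter.Eventually.filter_mono inf_le_right ?_
        rw [Filter.eventually_principal]
        intro s hs
        have hs' : -1 < s.re ∧ s.re < 2 := hs
        have hk := hK s hs'.1.le hs'.2.le
        rw [norm_mul, norm_pow, Real.norm_of_nonneg (Real.exp_pos _).le, one_mul]
        have h5 : ‖s + 2‖ ≤ 4 + |s.im| := by
          refine (Complex.norm_le_abs_re_add_abs_im _).trans ?_
          have e1 : (s + 2).re = s.re + 2 := by simp
          have e2 : (s + 2).im = s.im := by simp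
          rw [e1, e2, abs_of_nonneg (by linarith : (0:ℝ) ≤ s.re + 2)]
          linarith
        have h6 : ‖s + 2‖ ^ 2 ≤ 16 * Real.exp (Real.exp |s.im|) := by
          have h3 : |s.im| / 2 + 1 ≤ Real.exp (|s.im| / 2) := Real.add_one_le_exp _
          have h4 : Real.exp |s.im| = Real.exp (|s.im| / 2) ^ 2 := by
            rw [← Real.exp_nat_mul]; congr 1; push_cast; ring
          have h7 : Real.exp |s.im| + 1 ≤ Real.exp (Real.exp |s.im|) := Real.add_one_le_exp _
          have h0 := abs_nonneg s.im
          calc ‖s + 2‖ ^ 2 ≤ (4 + |s.im|) ^ 2 := by gcongr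
            _ ≤ 16 * (|s.im| / 2 + 1) ^ 2 := by nlinarith
            _ ≤ 16 * Real.exp (|s.im| / 2) ^ 2 := by gcongr
            _ ≤ 16 * Real.exp (Real.exp |s.im|) := by rw [← h4]; linarith
        calc ‖S.xi s‖ * ‖s + 2‖ ^ 2
            ≤ (K * Real.exp (4 * Real.exp |s.im|)) * (16 * Real.exp (Real.exp |s.im|)) := by
              gcongr
          _ = 16 * K * (Real.exp (4 * Real.exp |s.im|) * Real.exp (Real.exp |s.im|)) := by ring
          _ = _ := by rw [← Real.exp_add]; congr 2; ring
    · intro s hs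
      have h := hC (1 - starRingEnd ℂ s) (by simp [hs]; norm_num)
      rw [← aux_xi_refl] at h
      rw [norm_mul, norm_pow]
      have hle : ‖s + 2‖ ≤ ‖1 - starRingEnd ℂ s‖ := by
        rw [Complex.norm_def, Complex.norm_def]
        apply Real.sqrt_le_sqrt
        simp [Complex.normSq_apply, hs]
        norm_num
      calc ‖S.xi s‖ * ‖s + 2‖ ^ 2 ≤ ‖S.xi s‖ * ‖1 - starRingEnd ℂ s‖ ^ 2 := by gcongr
        _ ≤ C := h
        _ ≤ 9 * C := by linarith
    · intro s hs
      have h := hC s hs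
      rw [norm_mul, norm_pow]
      have hle : ‖s + 2‖ ≤ 3 * ‖s‖ := by
        have h1 := norm_add_le s 2
        have h2 := Complex.re_le_norm s
        have h3 : ‖(2 : ℂ)‖ = 2 := by simp
        rw [h3] at h1
        linarith
      calc ‖S.xi s‖ * ‖s + 2‖ ^ 2 ≤ ‖S.xi s‖ * (3 * ‖s‖) ^ 2 := by gcongr
        _ = 9 * (‖S.xi s‖ * ‖s‖ ^ 2) := by ring
        _ ≤ 9 * C := by gcongr
  refine ⟨9 * C, by positivity, fun s h1 h2 => ?_⟩
  have h := hmain s (by linarith) h2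
  rw [norm_mul, norm_pow] at h
  rw [← div_eq_mul_inv, le_div_iff₀ (by positivity)]
  refine le_trans ?_ h
  gcongr
  rw [← Complex.normSq_eq_norm_sq, Complex.normSq_apply]
  simp
  nlinarith

lemma aux_decay_mul_exp {f : ℂ → ℂ} (hf : auxDecay f) (c : ℂ) (w : ℝ) :
    auxDecay fun s => c * f s * Complex.exp (s * w) := by
  obtain ⟨C, hC0, hC⟩ := hf
  refine ⟨‖c‖ * C * Real.exp (2 * |w|), by positivity, fun s h1 h2 => ?_⟩
  have h := hC s h1 h2
  rw [norm_mul, norm_mul, Complex.norm_exp]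
  have he : (s * (w : ℂ)).re ≤ 2 * |w| := by
    simp
    have := le_abs_self w
    nlinarith [abs_nonneg w]
  calc ‖c‖ * ‖f s‖ * Real.exp (s * (w : ℂ)).re
      ≤ ‖c‖ * (C * (1 + s.im ^ 2)⁻¹) * Real.exp (2 * |w|) := by gcongr
    _ = _ := by ring

lemma auxP_auxDecay (S : SelbergClass) : auxDecay (auxP S) := by
  obtain ⟨C, hC0, hC⟩ := auxP_decay S 2
  refine ⟨4 * C, by positivity, fun s h1 h2 => ?_⟩
  have h := hC s h1 h2
  rw [← div_eq_mul_inv, le_div_iff₀ (by positivity)]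
  have hs : 1 + s.im ^ 2 ≤ 4 * ‖s‖ ^ 2 := by
    rw [← Complex.normSq_eq_norm_sq, Complex.normSq_apply]
    nlinarith
  calc ‖auxP S s‖ * (1 + s.im ^ 2) ≤ ‖auxP S s‖ * (4 * ‖s‖ ^ 2) := by gcongr
    _ = 4 * (‖auxP S s‖ * ‖s‖ ^ 2) := by ring
    _ ≤ _ := by gcongr

/-- the `n`-th term on the contour -/
noncomputable def auxg (S : SelbergClass) (x : ℝ) (n : ℕ) (s : ℂ) : ℂ :=
  (S.eps * S.a (n + 1) * Complex.exp (x / 2)) * auxP S s *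
    Complex.exp (s * ((Real.log S.Q - Real.log ((n : ℝ) + 1) - x : ℝ) : ℂ))

lemma auxg_diff (S : SelbergClass) (x : ℝ) (n : ℕ) (s : ℂ) (hs : 0 < s.re) :
    DifferentiableAt ℂ (auxg S x n) s := by
  unfold auxg
  have := auxP_diff S hs
  fun_prop

lemma auxg_decay (S : SelbergClass) (x : ℝ) (n : ℕ) : auxDecay (auxg S x n) :=
  aux_decay_mul_exp (auxP_auxDecay S) _ _

lemma aux_cpow_pos {r : ℝ} (hr : 0 < r) (s : ℂ) :
    (r : ℂ) ^ s = Complex.exp (s * (Real.log r : ℂ)) := by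
  rw [Complex.cpow_def_of_ne_zero (by exact_mod_cast hr.ne'), Complex.ofReal_log hr.le, mul_comm]

lemma auxg_half (S : SelbergClass) (x : ℝ) (n : ℕ) (z : ℝ) :
    auxg S x n (1 / 2 + Complex.I * z) =
      S.eps * (S.Q : ℂ) ^ ((1 : ℂ) / 2) *
            (S.a (n + 1) / ((n : ℂ) + 1) ^ ((1 : ℂ) / 2)) *
        (((1 / 4 + z ^ 2 : ℝ) : ℂ) ^ S.m *
              (∏ j, Complex.Gamma
                (Complex.I * (S.lam j : ℂ) * z + S.mu j + (S.lam j : ℂ) / 2)) *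
              (((((n : ℝ) + 1) * Real.exp x / S.Q : ℝ)) : ℂ) ^ (-(Complex.I * z))) := by
  have hn : (0 : ℝ) < (n : ℝ) + 1 := by positivity
  have hQ := S.hQ
  have e : ((n : ℂ) + 1) = (((n : ℝ) + 1 : ℝ) : ℂ) := by push_cast; rfl
  rw [e, aux_cpow_pos hQ, aux_cpow_pos hn, aux_cpow_pos (by positivity),
    Real.log_div (by positivity) hQ.ne', Real.log_mul hn.ne' (Real.exp_pos x).ne', Real.log_exp,
    auxg, auxP, ← mul_pow]
  have e1 : ((1 : ℂ) / 2 + Complex.I * z) * (1 - (1 / 2 + Complex.I * z)) =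
      ((1 / 4 + z ^ 2 : ℝ) : ℂ) := by
    push_cast
    linear_combination (-(z : ℂ) ^ 2) * Complex.I_sq
  have e2 : ∀ j, (S.lam j : ℂ) * (1 / 2 + Complex.I * z) + S.mu j =
      Complex.I * (S.lam j : ℂ) * z + S.mu j + (S.lam j : ℂ) / 2 := fun j => by ring
  simp only [e1, e2]
  rw [div_eq_mul_inv (S.a (n + 1)), ← Complex.exp_neg]
  set q : ℂ := ((Real.log S.Q : ℝ) : ℂ) with hq
  set l : ℂ := ((Real.log ((n : ℝ) + 1) : ℝ) : ℂ) with hl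
  push_cast
  rw [← hq]
  have e3 : Complex.exp (x / 2) * Complex.exp ((1 / 2 + Complex.I * z) * (q - l - x)) =
      Complex.exp (1 / 2 * q) * Complex.exp (-(1 / 2 * l)) *
        Complex.exp (-(Complex.I * z) * (l + x - q)) := by
    rw [← Complex.exp_add, ← Complex.exp_add, ← Complex.exp_add]
    congr 1; ring
  linear_combination (S.eps * S.a (n + 1) * (1 / 4 + (z : ℂ) ^ 2) ^ S.m * ∏ j, Complex.Gamma
                (Complex.I * (S.lam j : ℂ) * z + S.mu j + (S.lam j : ℂ) / 2)) * e3

/-- the integrand on the contour -/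
noncomputable def auxH (S : SelbergClass) (x : ℝ) (s : ℂ) : ℂ :=
  Complex.exp (x / 2) * S.xi s * Complex.exp (s * ((-x : ℝ) : ℂ))

lemma auxg_hasSum (S : SelbergClass) (x : ℝ) {s : ℂ} (hs : s.re = 2) :
    HasSum (fun n => auxg S x n s) (auxH S x s) := by
  have h := (S.hFseries s (by rw [hs]; norm_num)).mul_left
    (Complex.exp (x / 2) * (S.eps * (S.Q : ℂ) ^ s * auxP S s) * Complex.exp (s * ((-x : ℝ) : ℂ)))
  have hl : auxH S x s = Complex.exp (x / 2) * (S.eps * (S.Q : ℂ) ^ s * auxP S s) *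
      Complex.exp (s * ((-x : ℝ) : ℂ)) * S.F s := by
    rw [auxH, aux_xi_eq S (by rw [hs]; norm_num)]; ring
  rw [hl]
  have hf : (fun n => auxg S x n s) = fun n : ℕ => Complex.exp (x / 2) *
      (S.eps * (S.Q : ℂ) ^ s * auxP S s) * Complex.exp (s * ((-x : ℝ) : ℂ)) *
      (S.a (n + 1) * ((n : ℂ) + 1) ^ (-s)) := by
    funext n
    have hn : (0 : ℝ) < (n : ℝ) + 1 := by positivity
    have e : ((n : ℂ) + 1) = (((n : ℝ) + 1 : ℝ) : ℂ) := by push_cast; rfl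
    rw [e, aux_cpow_pos S.hQ, aux_cpow_pos hn, auxg]
    set q : ℂ := ((Real.log S.Q : ℝ) : ℂ) with hq
    set l : ℂ := ((Real.log ((n : ℝ) + 1) : ℝ) : ℂ) with hl
    have e3 : Complex.exp (s * ((Real.log S.Q - Real.log ((n : ℝ) + 1) - x : ℝ) : ℂ)) =
        Complex.exp (s * q) * Complex.exp (s * ((-x : ℝ) : ℂ)) * Complex.exp (-s * l) := by
      rw [← Complex.exp_add, ← Complex.exp_add]
      congr 1; rw [hq, hl]; push_cast; ring
    rw [e3]; ring
  rw [hf]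
  exact h

lemma auxg_norm (S : SelbergClass) (x : ℝ) (n : ℕ) {s : ℂ} (hs : s.re = 2) :
    ‖auxg S x n s‖ = (‖S.a (n + 1)‖ * Real.exp (-(2 * Real.log ((n : ℝ) + 1)))) *
      (Real.exp (x / 2 + 2 * (Real.log S.Q - x)) * ‖auxP S s‖) := by
  rw [auxg, norm_mul, norm_mul, norm_mul, norm_mul, S.heps, Complex.norm_exp, Complex.norm_exp]
  have e1 : (s * ((Real.log S.Q - Real.log ((n : ℝ) + 1) - x : ℝ) : ℂ)).re =
      2 * (Real.log S.Q - Real.log ((n : ℝ) + 1) - x) := by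
    rw [Complex.re_mul_ofReal, hs]
  have e2 : ((x : ℂ) / 2).re = x / 2 := by simp
  rw [e1, e2]
  have e3 : Real.exp (x / 2) * Real.exp (2 * (Real.log S.Q - Real.log ((n : ℝ) + 1) - x)) =
      Real.exp (-(2 * Real.log ((n : ℝ) + 1))) * Real.exp (x / 2 + 2 * (Real.log S.Q - x)) := by
    rw [← Real.exp_add, ← Real.exp_add]; congr 1; ring
  linear_combination (‖S.a (n + 1)‖ * ‖auxP S s‖) * e3

/-- **The Fourier transform of `Ξ` as an absolutely convergent sum of Gamma integrals**
(equation (2.2) of the paper).  With `Ξ(z) = ξ(1/2 + iz)`, `Ξ` is integrable on `ℝ` and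
for every real `x`,
`∫ Ξ(z) e^{-ixz} dz
  = ε Q^{1/2} ∑ₙ (aₙ/n^{1/2}) ∫ (1/4 + z²)^m (∏ Γ(iλⱼz + μⱼ + λⱼ/2)) (n e^x / Q)^{−iz} dz`,
the sum over `n` converging absolutely (`HasSum` in `ℂ` is absolute convergence). -/
theorem fourier_transform_XiF_as_sum (S : SelbergClass) :
    Integrable (fun z : ℝ => S.xi (1 / 2 + Complex.I * z)) ∧
    ∀ x : ℝ,
      HasSum
        (fun n : ℕ =>
          S.eps * (S.Q : ℂ) ^ ((1 : ℂ) / 2) *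
            (S.a (n + 1) / ((n : ℂ) + 1) ^ ((1 : ℂ) / 2)) *
            ∫ z : ℝ, ((1 / 4 + z ^ 2 : ℝ) : ℂ) ^ S.m *
              (∏ j, Complex.Gamma
                (Complex.I * (S.lam j : ℂ) * z + S.mu j + (S.lam j : ℂ) / 2)) *
              (((((n : ℝ) + 1) * Real.exp x / S.Q : ℝ)) : ℂ) ^ (-(Complex.I * z)))
        (∫ z : ℝ, S.xi (1 / 2 + Complex.I * z) * Complex.exp (-(Complex.I * x * z))) := by
  have hxd : ∀ s : ℂ, 0 < s.re → DifferentiableAt ℂ S.xi s := fun s _ => S.hxi_entire s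
  refine ⟨?_, fun x => ?_⟩
  · have h := aux_integrable hxd (aux_xi_decay S) (c := 1 / 2) le_rfl (by norm_num)
    push_cast at h
    exact h
  have hHd : ∀ s : ℂ, 0 < s.re → DifferentiableAt ℂ (auxH S x) s := by
    intro s hs
    unfold auxH
    have := hxd s hs
    fun_prop
  have hHdecay : auxDecay (auxH S x) := aux_decay_mul_exp (aux_xi_decay S) _ _
  have hre : ∀ z : ℝ, ((2 : ℂ) + Complex.I * z).re = 2 := fun z => by simp
  have hgint : ∀ n, Integrable (fun z : ℝ => auxg S x n (2 + Complex.I * z)) := by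
    intro n
    have h := aux_integrable (auxg_diff S x n) (auxg_decay S x n) (c := 2) (by norm_num) le_rfl
    push_cast at h
    exact h
  have hsum : Summable fun n => ∫ z : ℝ, ‖auxg S x n (2 + Complex.I * z)‖ := by
    have h := (aux_summable S).mul_right
      (∫ z : ℝ, Real.exp (x / 2 + 2 * (Real.log S.Q - x)) * ‖auxP S (2 + Complex.I * z)‖)
    refine h.congr fun n => ?_
    rw [← integral_const_mul]
    refine integral_congr_ae (ae_of_all _ fun z => ?_)
    exact (auxg_norm S x n (hre z)).symm
  have h := hasSum_integral_of_summable_integral_norm hgint hsum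
  have hR : ∫ z : ℝ, S.xi (1 / 2 + Complex.I * z) * Complex.exp (-(Complex.I * x * z)) =
      ∫ z : ℝ, ∑' n, auxg S x n (2 + Complex.I * z) := by
    simp only [fun z : ℝ => (auxg_hasSum S x (hre z)).tsum_eq]
    rw [← aux_shift hHd hHdecay]
    refine integral_congr_ae (ae_of_all _ fun z => ?_)
    simp only [auxH]
    have e : Complex.exp (-(Complex.I * x * z)) = Complex.exp (x / 2) *
        Complex.exp ((1 / 2 + Complex.I * z) * ((-x : ℝ) : ℂ)) := by
      rw [← Complex.exp_add]
      congr 1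
      push_cast; ring
    rw [e]; ring
  rw [hR]
  refine (congrArg (fun f => HasSum f _) (funext fun n => ?_)).mpr h
  rw [← aux_shift (auxg_diff S x n) (auxg_decay S x n), ← integral_const_mul]
  exact integral_congr_ae (ae_of_all _ fun z => (auxg_half S x n z).symm)
end
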